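/- SCW̄_p is a metric on 𝒫_p(𝒳_1 × 𝒫_p(𝒳_2)) (it is symmetric, satisfies the triangle inequality, and vanishes exactly on the diagonal) and satisfies SCW̄_p(μ, ν) ≤ AW̄_p(μ, ν) for all μ, ν ∈ 𝒫_p(𝒳_1 × 𝒫_p(𝒳_2)). -/

import Mathlib

open MeasureTheory ProbabilityTheory ENNReal Filter Topology

noncomputable section

namespace AWPaper

/-! ### Generic constructions -/

variable {α β : Type*}

/-- The set of couplings of two measures. -/
def Cpl [MeasurableSpace α] [MeasurableSpace β] (μ : Measure α) (ν : Measure β) :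
    Set (Measure (α × β)) :=
  {π | π.map Prod.fst = μ ∧ π.map Prod.snd = ν}

/-- The `p`-Wasserstein distance (with values in `ℝ≥0∞`) associated to an
`ℝ≥0∞`-valued distance function `d`. -/
def Wp [MeasurableSpace α] (p : ℝ) (d : α → α → ℝ≥0∞) (μ ν : Measure α) : ℝ≥0∞ :=
  ⨅ π ∈ Cpl μ ν, (∫⁻ z, d z.1 z.2 ^ p ∂π) ^ (1 / p)

/-- The topology generated by the open balls of an `ℝ≥0∞`-valued distance
function.  For a genuine metric this is the metric topology. -/
def ballTop (d : α → α → ℝ≥0∞) : TopologicalSpace α :=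
  TopologicalSpace.generateFrom {s | ∃ x ε, 0 < ε ∧ s = {y | d x y < ε}}

/-- The product distance of two `ℝ≥0∞`-valued distances, `ℓ^p`-style. -/
def prodDist (p : ℝ) (d₁ : α → α → ℝ≥0∞) (d₂ : β → β → ℝ≥0∞) :
    α × β → α × β → ℝ≥0∞ :=
  fun u v => (d₁ u.1 v.1 ^ p + d₂ u.2 v.2 ^ p) ^ (1 / p)

/-- Membership in the `p`-Wasserstein space: a probability measure with finite
`p`-th moment (w.r.t. the distance function `d`). -/
def MemPp [MeasurableSpace α] (p : ℝ) (d : α → α → ℝ≥0∞) (μ : Measure α) : Prop :=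
  IsProbabilityMeasure μ ∧ ∃ x₀, ∫⁻ x, d x₀ x ^ p ∂μ ≠ ∞

/-- The weak topology on measures induced by integration of bounded continuous
functions, for a given topology `τ` on the base space. -/
def weakTop [MeasurableSpace α] (τ : TopologicalSpace α) : TopologicalSpace (Measure α) :=
  TopologicalSpace.induced
    (fun μ => fun f : @BoundedContinuousFunction α ℝ τ _ => ∫ x, f x ∂μ)
    Pi.topologicalSpace

/-- The product topology built from two explicitly given topologies. -/
def prodTop (τ₁ : TopologicalSpace α) (τ₂ : TopologicalSpace β) : TopologicalSpace (α × β) :=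
  TopologicalSpace.induced Prod.fst τ₁ ⊓ TopologicalSpace.induced Prod.snd τ₂

/-- An everywhere-defined version of the disintegration kernel: it agrees with
`Measure.condKernel` on finite measures. -/
def condK [MeasurableSpace α] [MeasurableSpace β] [StandardBorelSpace β] [Nonempty β]
    (ρ : Measure (α × β)) : Kernel α β :=
  letI := Classical.dec (IsFiniteMeasure ρ)
  if h : IsFiniteMeasure ρ then @Measure.condKernel α β _ _ _ _ ρ h else 0

/-- The disintegration map `𝒫(A × B) → 𝒫(A × 𝒫(B))`. -/
def disint [MeasurableSpace α] [MeasurableSpace β] [StandardBorelSpace β] [Nonempty β]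
    (μ : Measure (α × β)) : Measure (α × Measure β) :=
  μ.map (fun z => (z.1, condK μ z.1))

/-- The intensity ("und") map `𝒫(A × 𝒫(B)) → 𝒫(A × B)`. -/
def und [MeasurableSpace α] [MeasurableSpace β] (μ : Measure (α × Measure β)) :
    Measure (α × β) :=
  μ.bind (fun z => (Measure.dirac z.1).prod z.2)

/-! ### Path spaces -/

variable {X : Type*} [MeasurableSpace X]

/-- The path-space distance `ρ̄((x_t),(y_t)) = (∑ ρ(x_t,y_t)^p)^{1/p}`. -/
def pathDist (p : ℝ) (d : X → X → ℝ≥0∞) {N : ℕ} :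
    (Fin N → X) → (Fin N → X) → ℝ≥0∞ :=
  fun x y => (∑ t, d (x t) (y t) ^ p) ^ (1 / p)

/-- The first `t` coordinates of a path. -/
def restr {N : ℕ} (t : ℕ) (h : t ≤ N) (x : Fin N → X) : Fin t → X :=
  fun s => x (Fin.castLE h s)

/-- The last `N - t` coordinates of a path. -/
def tailr {N : ℕ} (t : ℕ) (h : t ≤ N) (x : Fin N → X) : Fin (N - t) → X :=
  fun s => x ⟨t + s.1, by have := s.2; omega⟩

/-- A coupling `π` of two path measures is causal: for every `t` and Borel
`A ⊆ 𝒳^t`, `π((Y_1,…,Y_t) ∈ A | X) = π((Y_1,…,Y_t) ∈ A | X_1,…,X_t)` a.s. -/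
def Causal {N : ℕ} (π : Measure ((Fin N → X) × (Fin N → X))) : Prop :=
  ∀ (t : ℕ) (h : t ≤ N) (A : Set (Fin t → X)), MeasurableSet A →
    (π[fun z => A.indicator (fun _ => (1 : ℝ)) (restr t h z.2) |
        MeasurableSpace.comap Prod.fst inferInstance])
      =ᵐ[π]
    (π[fun z => A.indicator (fun _ => (1 : ℝ)) (restr t h z.2) |
        MeasurableSpace.comap (fun z => restr t h z.1) inferInstance])

/-- Bicausal couplings. -/
def Bicausal {N : ℕ} (π : Measure ((Fin N → X) × (Fin N → X))) : Prop :=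
  Causal π ∧ Causal (π.map Prod.swap)

/-- The causal Wasserstein "distance" `CW_p`. -/
def CW (p : ℝ) (d : X → X → ℝ≥0∞) {N : ℕ} (μ ν : Measure (Fin N → X)) : ℝ≥0∞ :=
  ⨅ π ∈ {π ∈ Cpl μ ν | Causal π}, (∫⁻ z, pathDist p d z.1 z.2 ^ p ∂π) ^ (1 / p)

/-- The symmetrized causal Wasserstein distance `SCW_p`. -/
def SCW (p : ℝ) (d : X → X → ℝ≥0∞) {N : ℕ} (μ ν : Measure (Fin N → X)) : ℝ≥0∞ :=
  max (CW p d μ ν) (CW p d ν μ)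

/-- The adapted (nested, bicausal) Wasserstein distance `AW_p`. -/
def AW (p : ℝ) (d : X → X → ℝ≥0∞) {N : ℕ} (μ ν : Measure (Fin N → X)) : ℝ≥0∞ :=
  ⨅ π ∈ {π ∈ Cpl μ ν | Bicausal π}, (∫⁻ z, pathDist p d z.1 z.2 ^ p ∂π) ^ (1 / p)

/-! ### Nested spaces (Pflug's nested distributions / Vershik's iterated spaces) -/

/-- A measurable space together with an `ℝ≥0∞`-valued distance. -/
structure QMS : Type 1 where
  carrier : Type
  inst : MeasurableSpace carrier
  dist : carrier → carrier → ℝ≥0∞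

/-- The nested sequence of spaces: `nest X _ d p 0 = 𝒳` (this is `𝒳_N`), and
`nest X _ d p (k+1) = 𝒳 × 𝒫(nest X _ d p k)` with the nested distance
`D = (ρ^p + 𝒲_p^p)^{1/p}`.  Thus `𝒳_1` (for `N = k+1` time points) is
`nest X _ d p k`. -/
def nest (X : Type) (mX : MeasurableSpace X) (d : X → X → ℝ≥0∞) (p : ℝ) : ℕ → QMS
  | 0 => ⟨X, mX, d⟩
  | (k + 1) =>
    let Q := nest X mX d p k
    ⟨X × @Measure Q.carrier Q.inst,
      @Prod.instMeasurableSpace _ _ mX (@Measure.instMeasurableSpace _ Q.inst),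
      fun a b => (d a.1 b.1 ^ p + (@Wp _ Q.inst p Q.dist a.2 b.2) ^ p) ^ (1 / p)⟩

section NMapSec

variable (Y : Type) [mY : MeasurableSpace Y] [TopologicalSpace Y] [PolishSpace Y]
  [BorelSpace Y] [Nonempty Y]

/-- The map `𝒩` sending the law of a process with `k+1` time steps to the
corresponding nested distribution, via iterated regular conditional laws. -/
def NMap (d : Y → Y → ℝ≥0∞) (p : ℝ) :
    ∀ k : ℕ, Measure (Fin (k + 1) → Y) →
      @Measure (nest Y mY d p k).carrier (nest Y mY d p k).inst
  | 0, μ =>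
    letI : MeasurableSpace (nest Y mY d p 0).carrier := (nest Y mY d p 0).inst
    μ.map (fun x => x 0)
  | (k + 1), μ =>
    letI : MeasurableSpace (nest Y mY d p k).carrier := (nest Y mY d p k).inst
    letI : MeasurableSpace (nest Y mY d p (k + 1)).carrier := (nest Y mY d p (k + 1)).inst
    (μ.map (fun x => x 0)).map
      (fun x₀ => (x₀, NMap d p k
        ((condK (μ.map (fun x => (x 0, fun s : Fin (k + 1) => x s.succ)))) x₀)))

end NMapSec

section PathStructures

variable {Y : Type*} [mY : MeasurableSpace Y]

/-- A process `L` is adapted: `L t` depends only on the first `t+1` coordinates. -/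
def AdaptedProc {N : ℕ} (L : Fin N → (Fin N → Y) → ℝ) : Prop :=
  ∀ (t : Fin N) (x y : Fin N → Y), (∀ s : Fin N, s ≤ t → x s = y s) → L t x = L t y

/-- `τ` is a stopping time of the canonical filtration on the path space. -/
def IsStopTime {N : ℕ} (τ : (Fin N → Y) → Fin N) : Prop :=
  ∀ t : Fin N,
    MeasurableSet[MeasurableSpace.comap (restr (X := Y) (t.1 + 1) t.2) inferInstance]
      {x | τ x = t}

/-- The optimal stopping value `v^L(μ)`. -/
def stopVal {N : ℕ} (L : Fin N → (Fin N → Y) → ℝ) (μ : Measure (Fin N → Y)) : ℝ :=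
  ⨅ τ : {τ : (Fin N → Y) → Fin N // IsStopTime τ}, ∫ x, L (τ.1 x) x ∂μ

variable [TopologicalSpace Y]

/-- `AC(X̄)`: adapted processes which are continuous and bounded. -/
def ACbdd {N : ℕ} (L : Fin N → (Fin N → Y) → ℝ) : Prop :=
  (∀ t, Continuous (L t)) ∧ AdaptedProc L ∧ ∃ C : ℝ, ∀ t x, |L t x| ≤ C

/-- `AC_p(X̄)`: adapted continuous processes of growth of order `p`. -/
def ACp (p : ℝ) (d : Y → Y → ℝ≥0∞) {N : ℕ} (L : Fin N → (Fin N → Y) → ℝ) : Prop :=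
  (∀ t, Continuous (L t)) ∧ AdaptedProc L ∧
    ∃ (C : ℝ) (x₀ : Fin N → Y), ∀ t x, |L t x| ≤ C * (1 + ((pathDist p d x₀ x) ^ p).toReal)

/-- The optimal stopping topology (weak version, bounded continuous rewards). -/
def stopTopW (N : ℕ) : TopologicalSpace (Measure (Fin N → Y)) :=
  ⨅ L : {L : Fin N → (Fin N → Y) → ℝ // ACbdd L},
    TopologicalSpace.induced (stopVal L.1) inferInstance

/-- The `𝒲_p`-optimal stopping topology. -/
def stopTopWp (p : ℝ) (d : Y → Y → ℝ≥0∞) (N : ℕ) :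
    TopologicalSpace (Measure (Fin N → Y)) :=
  ⨅ L : {L : Fin N → (Fin N → Y) → ℝ // ACp p d L},
    TopologicalSpace.induced (stopVal L.1) inferInstance

variable [PolishSpace Y] [BorelSpace Y] [Nonempty Y]

/-- Hellwig's map `I_t`, sending `μ` to the joint law of the first `t`
coordinates together with the conditional law of the remaining coordinates. -/
def infoMap (N t : ℕ) (h : t ≤ N) (μ : Measure (Fin N → Y)) :
    Measure ((Fin t → Y) × Measure (Fin (N - t) → Y)) :=
  μ.map (fun x => (restr t h x,
    condK (μ.map (fun y => (restr t h y, tailr t h y))) (restr t h x)))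

/-- Hellwig's information topology (weak version). -/
def infoTopW (N : ℕ) : TopologicalSpace (Measure (Fin N → Y)) :=
  ⨅ (t : ℕ) (_ : 1 ≤ t) (h : t ≤ N - 1),
    TopologicalSpace.induced (infoMap N t (le_trans h (Nat.sub_le N 1)))
      (weakTop (prodTop Pi.topologicalSpace (weakTop Pi.topologicalSpace)))

/-- The `𝒲_p`-information topology. -/
def infoTopWp (p : ℝ) (d : Y → Y → ℝ≥0∞) (N : ℕ) :
    TopologicalSpace (Measure (Fin N → Y)) :=
  ⨅ (t : ℕ) (_ : 1 ≤ t) (h : t ≤ N - 1),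
    TopologicalSpace.induced (infoMap N t (le_trans h (Nat.sub_le N 1)))
      (ballTop (Wp p (prodDist p (pathDist p d) (Wp p (pathDist p d)))))

/-- Aldous' prediction process `Z_t^μ` (as a function of the path). -/
def predict (N : ℕ) (μ : Measure (Fin N → Y)) (t : ℕ) (h : t ≤ N) :
    (Fin N → Y) → Measure (Fin N → Y) :=
  fun x => condK (μ.map (fun y => (restr t h y, y))) (restr t h x)

/-- Aldous' map `E`, sending `μ` to the joint law of the path together with its
prediction process. -/
def aldousMap (N : ℕ) (μ : Measure (Fin N → Y)) :
    Measure ((Fin N → Y) × (Fin (N + 1) → Measure (Fin N → Y))) :=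
  μ.map (fun x =>
    (x, fun t : Fin (N + 1) => predict N μ t.1 (Nat.lt_succ_iff.mp t.2) x))

/-- Aldous' extended weak topology. -/
def aldousTopW (N : ℕ) : TopologicalSpace (Measure (Fin N → Y)) :=
  TopologicalSpace.induced (aldousMap N)
    (weakTop (prodTop Pi.topologicalSpace
      (@Pi.topologicalSpace (Fin (N + 1)) (fun _ => Measure (Fin N → Y))
        (fun _ => weakTop Pi.topologicalSpace))))

/-- The extended `𝒲_p`-topology. -/
def aldousTopWp (p : ℝ) (d : Y → Y → ℝ≥0∞) (N : ℕ) :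
    TopologicalSpace (Measure (Fin N → Y)) :=
  TopologicalSpace.induced (aldousMap N)
    (ballTop (Wp p (prodDist p (pathDist p d)
      (fun Z Z' : Fin (N + 1) → Measure (Fin N → Y) =>
        (∑ t, Wp p (pathDist p d) (Z t) (Z' t) ^ p) ^ (1 / p)))))

end PathStructures

/-! ### The lifted two-time-point space `𝒳₁ × 𝒫_p(𝒳₂)` -/

section Lifted

variable {A B : Type*} [MeasurableSpace A] [MeasurableSpace B]

/-- The nested distance on `𝒳₁ × 𝒫_p(𝒳₂)`. -/
def liftDist (p : ℝ) (dA : A → A → ℝ≥0∞) (dB : B → B → ℝ≥0∞) :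
    (A × Measure B) → (A × Measure B) → ℝ≥0∞ :=
  fun u v => (dA u.1 v.1 ^ p + Wp p dB u.2 v.2 ^ p) ^ (1 / p)

/-- `η` is a version of the measure-valued conditional expectation
`E_γ[X̂₂ | Y⃗]` (i.e. the barycenter of a regular conditional law of `X̂₂`
given `Y⃗ = (Y₁, Ŷ₂)`). -/
def IsCondBar (γ : Measure ((A × Measure B) × (A × Measure B)))
    (η : (A × Measure B) × (A × Measure B) → Measure B) : Prop :=
  (∃ g : (A × Measure B) → Measure B, Measurable g ∧ ∀ z, η z = g z.2) ∧
  (∀ z, IsProbabilityMeasure (η z)) ∧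
  ∀ S : Set (A × Measure B), MeasurableSet S → ∀ E : Set B, MeasurableSet E →
    ∫⁻ z in {z | z.2 ∈ S}, η z E ∂γ = ∫⁻ z in {z | z.2 ∈ S}, z.1.2 E ∂γ

/-- `AW̄_p`, the `p`-Wasserstein distance on `𝒫_p(𝒳₁ × 𝒫_p(𝒳₂))`. -/
def AWbar (p : ℝ) (dA : A → A → ℝ≥0∞) (dB : B → B → ℝ≥0∞)
    (μ ν : Measure (A × Measure B)) : ℝ≥0∞ :=
  Wp p (liftDist p dA dB) μ ν

/-- `CW̄_p`, the lifted causal Wasserstein "distance". -/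
def CWbar (p : ℝ) (dA : A → A → ℝ≥0∞) (dB : B → B → ℝ≥0∞)
    (μ ν : Measure (A × Measure B)) : ℝ≥0∞ :=
  ⨅ γ ∈ Cpl μ ν, ⨅ η ∈ {η | IsCondBar γ η},
    (∫⁻ z, (dA z.1.1 z.2.1 ^ p + Wp p dB (η z) z.2.2 ^ p) ∂γ) ^ (1 / p)

/-- `SCW̄_p`, the symmetrization of `CW̄_p`. -/
def SCWbar (p : ℝ) (dA : A → A → ℝ≥0∞) (dB : B → B → ℝ≥0∞)
    (μ ν : Measure (A × Measure B)) : ℝ≥0∞ :=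
  max (CWbar p dA dB μ ν) (CWbar p dA dB ν μ)

/-- Membership in `𝒫_p(𝒳₁ × 𝒫_p(𝒳₂))`: a probability measure, concentrated on
`𝒳₁ × 𝒫_p(𝒳₂)`, with finite `p`-th moment for the nested distance. -/
def MemPpLift (p : ℝ) (dA : A → A → ℝ≥0∞) (dB : B → B → ℝ≥0∞)
    (μ : Measure (A × Measure B)) : Prop :=
  IsProbabilityMeasure μ ∧ (∀ᵐ z ∂μ, MemPp p dB z.2) ∧
    ∃ z₀ : A × Measure B, MemPp p dB z₀.2 ∧ ∫⁻ z, liftDist p dA dB z₀ z ^ p ∂μ ≠ ∞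

/-- Two-time-point causality: given a coupling `π` of measures on products
`A₁ × B₁` and `A₂ × B₂`, the conditional law of `Y₁` given `X = (X₁, X₂)`
coincides with the conditional law of `Y₁` given `X₁`. -/
def Causal2 {A₁ B₁ A₂ B₂ : Type*} [MeasurableSpace A₁] [MeasurableSpace B₁]
    [MeasurableSpace A₂] [MeasurableSpace B₂]
    (π : Measure ((A₁ × B₁) × (A₂ × B₂))) : Prop :=
  ∀ S : Set A₂, MeasurableSet S →
    (π[fun z => S.indicator (fun _ => (1 : ℝ)) z.2.1 |
        MeasurableSpace.comap Prod.fst inferInstance])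
      =ᵐ[π]
    (π[fun z => S.indicator (fun _ => (1 : ℝ)) z.2.1 |
        MeasurableSpace.comap (fun z => z.1.1) inferInstance])

/-- The two-time-point causal Wasserstein "distance" on `𝒫_p(𝒳₁ × 𝒳₂)`. -/
def CW2 (p : ℝ) (dA : A → A → ℝ≥0∞) (dB : B → B → ℝ≥0∞)
    (μ ν : Measure (A × B)) : ℝ≥0∞ :=
  ⨅ π ∈ {π ∈ Cpl μ ν | Causal2 π},
    (∫⁻ z, (dA z.1.1 z.2.1 ^ p + dB z.1.2 z.2.2 ^ p) ∂π) ^ (1 / p)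

end Lifted

/-!
Disintegrating a coupling of `μ` and `ν` along `ν` yields a Markov kernel `K` with `K ∘ₘ ν = μ`,
and the causal cost becomes the sum of the transport cost on `𝒳₁` and the integral over
`y = (y₁, n)` of `W_p(b(y), n)^p`, where `b(y)` is the barycenter of the measures drawn from `K y`.

Jensen's inequality for `W_p` along kernels, which holds because on a finite space `W_p^p` is the
value of a linear program and hence jointly convex in the marginals, gives `CW̄_p ≤ AW̄_p`.
Couplings compose as kernels, and Jensen's and Minkowski's inequalities bound the cost of the
composition, which gives the triangle inequality.

For the separation property, let `u (x, m) = F x + ∫ G dm` with `F, G ≥ 0` bounded Lipschitz. Since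
`u` is affine in `m`, its mean under `K y` exceeds `u y` by at most a multiple of the cost, and
convexity of `exp (-·)` gives `∫ exp (-u) dν ≤ ∫ exp (-u) dμ` once `CW̄_p(μ, ν) = 0`. If
both directions vanish, the Laplace transforms of `μ` and `ν` agree along a family of `u`, closed
under addition, that separates the points of `𝒳₁ × 𝒫_p(𝒳₂)`, so `μ = ν`.
-/

section Couplings

variable {A B C Ω : Type*} [MeasurableSpace A] [MeasurableSpace B] [MeasurableSpace C]
  [MeasurableSpace Ω]

lemma map_prodMk_mem_Cpl (κ : Measure Ω) {f : Ω → A} {g : Ω → B} (hf : Measurable f)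
    (hg : Measurable g) : κ.map (fun ω => (f ω, g ω)) ∈ Cpl (κ.map f) (κ.map g) :=
  ⟨Measure.map_map measurable_fst (hf.prodMk hg), Measure.map_map measurable_snd (hf.prodMk hg)⟩

variable {μ : Measure A} {ν : Measure B} {π : Measure (A × B)}

lemma isProbabilityMeasure_of_mem_Cpl [IsProbabilityMeasure μ] (hπ : π ∈ Cpl μ ν) :
    IsProbabilityMeasure π :=
  have : IsProbabilityMeasure (π.map Prod.fst) := hπ.1.symm ▸ ‹_›
  Measure.isProbabilityMeasure_of_map Prod.fst

lemma swap_mem_Cpl (hπ : π ∈ Cpl μ ν) : π.map Prod.swap ∈ Cpl ν μ := by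
  have := map_prodMk_mem_Cpl π measurable_snd measurable_fst
  rwa [hπ.1, hπ.2] at this

lemma lintegral_fst_of_mem_Cpl (hπ : π ∈ Cpl μ ν) {f : A → ℝ≥0∞} (hf : Measurable f) :
    ∫⁻ z, f z.1 ∂π = ∫⁻ x, f x ∂μ := by
  rw [← hπ.1, lintegral_map hf measurable_fst]

lemma lintegral_snd_of_mem_Cpl (hπ : π ∈ Cpl μ ν) {f : B → ℝ≥0∞} (hf : Measurable f) :
    ∫⁻ z, f z.2 ∂π = ∫⁻ y, f y ∂ν := by
  rw [← hπ.2, lintegral_map hf measurable_snd]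

lemma map_compProd_comap (ρ : Measure A) [SFinite ρ] (K : Kernel B C) [IsSFiniteKernel K]
    {f : A → B} (hf : Measurable f) :
    (ρ ⊗ₘ K.comap f hf).map (fun w => (f w.1, w.2)) = ρ.map f ⊗ₘ K := by
  have hm : Measurable fun w : A × C => (f w.1, w.2) := by fun_prop
  ext s hs
  rw [Measure.map_apply hm hs, Measure.compProd_apply (hm hs), Measure.compProd_apply hs,
    lintegral_map (Kernel.measurable_kernel_prodMk_left hs) hf]
  rfl

lemma exists_glued_coupling [StandardBorelSpace C] {lam : Measure C} [IsProbabilityMeasure μ]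
    [IsProbabilityMeasure ν] {π' : Measure (B × C)} (hπ : π ∈ Cpl μ ν) (hπ' : π' ∈ Cpl ν lam) :
    ∃ θ : Measure ((A × B) × C), θ.map Prod.fst = π ∧ θ.map (fun w => (w.1.2, w.2)) = π' := by
  have := isProbabilityMeasure_of_mem_Cpl hπ
  have := isProbabilityMeasure_of_mem_Cpl hπ'
  have : Nonempty C := (nonempty_of_isProbabilityMeasure π').map Prod.snd
  refine ⟨π ⊗ₘ π'.condKernel.comap Prod.snd measurable_snd, Measure.fst_compProd _ _, ?_⟩
  rw [map_compProd_comap, hπ.2, ← hπ'.1]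
  exact π'.disintegrate π'.condKernel

lemma lintegral_Lp_add_add_le {p : ℝ} (hp : 1 ≤ p) {κ : Measure Ω} {f g h : Ω → ℝ≥0∞}
    (hf : AEMeasurable f κ) (hg : AEMeasurable g κ) (hh : AEMeasurable h κ) :
    (∫⁻ ω, (f ω + g ω + h ω) ^ p ∂κ) ^ (1 / p) ≤
      (∫⁻ ω, f ω ^ p ∂κ) ^ (1 / p) + (∫⁻ ω, g ω ^ p ∂κ) ^ (1 / p) +
        (∫⁻ ω, h ω ^ p ∂κ) ^ (1 / p) :=
  (ENNReal.lintegral_Lp_add_le (hf.add hg) hh hp).trans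
    (add_le_add_left (ENNReal.lintegral_Lp_add_le hf hg hp) _)

end Couplings

section Wasserstein

variable {A B : Type*} [MeasurableSpace A] [MeasurableSpace B] {p : ℝ} {d : A → A → ℝ≥0∞}
  {l m n : Measure A}

lemma Wp_le {π : Measure (A × A)} (hπ : π ∈ Cpl m n) :
    Wp p d m n ≤ (∫⁻ z, d z.1 z.2 ^ p ∂π) ^ (1 / p) :=
  iInf₂_le π hπ

lemma Wp_comm (hd : ∀ x y, d x y = d y x) (m n : Measure A) : Wp p d m n = Wp p d n m := by
  suffices h : ∀ m n, Wp p d m n ≤ Wp p d n m from (h m n).antisymm (h n m)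
  refine fun m n => le_iInf₂ fun π hπ => (Wp_le (swap_mem_Cpl hπ)).trans_eq ?_
  rw [show (Prod.swap : A × A → A × A) = MeasurableEquiv.prodComm from rfl, lintegral_map_equiv]
  exact congrArg (· ^ (1 / p)) (lintegral_congr fun z => congrArg (· ^ p) (hd _ _))

lemma Wp_map_map_le (hp : 0 ≤ p) {f g : B → A} (hf : Measurable f) (hg : Measurable g)
    (κ : Measure B) :
    Wp p d (κ.map f) (κ.map g) ≤ (∫⁻ ω, d (f ω) (g ω) ^ p ∂κ) ^ (1 / p) :=
  (Wp_le (map_prodMk_mem_Cpl κ hf hg)).trans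
    (ENNReal.rpow_le_rpow (lintegral_map_le _ _) (one_div_nonneg.2 hp))

lemma Wp_self (hp : 0 < p) (hd : ∀ x, d x x = 0) (m : Measure A) : Wp p d m m = 0 := by
  have h := Wp_map_map_le (d := d) hp.le measurable_id measurable_id m
  simpa [hd, ENNReal.zero_rpow_of_pos hp, ENNReal.zero_rpow_of_pos (inv_pos.2 hp)] using h

lemma Wp_triangle [StandardBorelSpace A] (hp : 1 ≤ p)
    (hd : Measurable fun z : A × A => d z.1 z.2) (tri : ∀ x y z, d x z ≤ d x y + d y z)
    (l m n : Measure A) [IsProbabilityMeasure l] [IsProbabilityMeasure m] :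
    Wp p d l n ≤ Wp p d l m + Wp p d m n := by
  conv_rhs => rw [Wp, Wp]
  simp_rw [ENNReal.iInf_add, ENNReal.add_iInf]
  refine le_iInf₂ fun π hπ => le_iInf₂ fun π' hπ' => ?_
  obtain ⟨θ, h12, h23⟩ := exists_glued_coupling hπ hπ'
  have h1 : θ.map (fun w => w.1.1) = l := by
    rw [← hπ.1, ← h12, Measure.map_map measurable_fst measurable_fst]; rfl
  have h3 : θ.map Prod.snd = n := by
    rw [← hπ'.2, ← h23, Measure.map_map measurable_snd (by fun_prop)]; rfl
  calc Wp p d l n ≤ (∫⁻ w, d w.1.1 w.2 ^ p ∂θ) ^ (1 / p) := by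
        rw [← h1, ← h3]
        exact Wp_map_map_le (by positivity) (by fun_prop) measurable_snd θ
    _ ≤ (∫⁻ w, (d w.1.1 w.1.2 + d w.1.2 w.2) ^ p ∂θ) ^ (1 / p) := by gcongr; exact tri _ _ _
    _ ≤ (∫⁻ w, d w.1.1 w.1.2 ^ p ∂θ) ^ (1 / p) + (∫⁻ w, d w.1.2 w.2 ^ p ∂θ) ^ (1 / p) :=
        ENNReal.lintegral_Lp_add_le (hd.comp measurable_fst).aemeasurable
          (hd.comp (by fun_prop : Measurable fun w : (A × A) × A => (w.1.2, w.2))).aemeasurable hp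
    _ = _ := by
        rw [← h23, ← h12, lintegral_map (hd.pow_const p) measurable_fst,
          lintegral_map (hd.pow_const p) (by fun_prop)]

lemma Wp_dirac_left [MeasurableSingletonClass A] (x : A) (n : Measure A)
    [IsProbabilityMeasure n] (hd : Measurable (d x)) :
    Wp p d (Measure.dirac x) n = (∫⁻ y, d x y ^ p ∂n) ^ (1 / p) := by
  have key {π : Measure (A × A)} (hπ : π ∈ Cpl (Measure.dirac x) n) :
      ∫⁻ z, d z.1 z.2 ^ p ∂π = ∫⁻ y, d x y ^ p ∂n := by
    have hx : ∀ᵐ z ∂π, z.1 = x :=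
      ae_of_ae_map measurable_fst.aemeasurable (hπ.1 ▸ (ae_dirac_iff (measurableSet_eq)).2 rfl)
    rw [← lintegral_snd_of_mem_Cpl hπ (hd.pow_const p)]
    exact lintegral_congr_ae (hx.mono fun z hz => by simp only [hz])
  refine le_antisymm ?_ (le_iInf₂ fun π hπ => by rw [key hπ])
  have hprod : (Measure.dirac x).prod n ∈ Cpl (Measure.dirac x) n := ⟨by simp, by simp⟩
  exact (Wp_le hprod).trans_eq (by rw [key hprod])

end Wasserstein

section WassersteinEDist

variable {B : Type*} [MetricSpace B] [CompleteSpace B] [SecondCountableTopology B]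
  [MeasurableSpace B] [BorelSpace B] {p : ℝ} {m n : Measure B}

lemma Wp_edist_triangle (hp : 1 ≤ p) (l m n : Measure B) [IsProbabilityMeasure l]
    [IsProbabilityMeasure m] : Wp p edist l n ≤ Wp p edist l m + Wp p edist m n :=
  Wp_triangle hp measurable_edist edist_triangle l m n

lemma MemPp.Wp_dirac_ne_top (hp : 1 ≤ p) (hm : MemPp p edist m) (x : B) :
    Wp p edist (Measure.dirac x) m ≠ ∞ := by
  obtain ⟨_, x₀, hx₀⟩ := hm
  refine ne_top_of_le_ne_top (ENNReal.add_ne_top.2 ⟨?_, ?_⟩)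
    (Wp_edist_triangle hp (Measure.dirac x) (Measure.dirac x₀) m)
  · rw [Wp_dirac_left x _ measurable_edist_right, lintegral_dirac]
    have := edist_ne_top x x₀
    finiteness
  · rw [Wp_dirac_left x₀ m measurable_edist_right]
    finiteness

lemma MemPp.lintegral_edist_rpow_ne_top (hp : 1 ≤ p) (hm : MemPp p edist m) (x : B) :
    ∫⁻ y, edist x y ^ p ∂m ≠ ∞ := by
  have := hm.1
  have h := hm.Wp_dirac_ne_top hp x
  rw [Wp_dirac_left x m measurable_edist_right] at h
  exact fun h' => h (by rw [h', ENNReal.top_rpow_of_pos (by positivity)])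

end WassersteinEDist

section LowerEnvelope

/-- The lower boundary of a set `K` of points `(x, r)`, as a function of `x`; it is `∞` off the
projection of `K`. For the set of (marginals, cost) of all transport plans on a finite space it is
the optimal transport cost. -/
def lowerEnvelope {E : Type*} (K : Set (E × ℝ)) (x : E) : ℝ≥0∞ :=
  ⨅ r ∈ {r : ℝ | (x, r) ∈ K}, ENNReal.ofReal r

lemma lowerEnvelope_le {E : Type*} {K : Set (E × ℝ)} {x : E} {r : ℝ} (h : (x, r) ∈ K) :
    lowerEnvelope K x ≤ ENNReal.ofReal r :=
  iInf₂_le r h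

section Topological

variable {E : Type*} [TopologicalSpace E] [T2Space E] {K : Set (E × ℝ)}

lemma exists_lowerEnvelope_eq (hK : IsCompact K) {x : E} (hx : ∃ r, (x, r) ∈ K) :
    ∃ r, (x, r) ∈ K ∧ lowerEnvelope K x = ENNReal.ofReal r := by
  have hfib : IsCompact {r : ℝ | (x, r) ∈ K} := by
    convert (hK.inter_right (isClosed_singleton.preimage continuous_fst : IsClosed
      (Prod.fst ⁻¹' {x}))).image continuous_snd using 1
    ext r
    simp
  obtain ⟨r, hr, hmin⟩ := hfib.exists_isLeast hx
  exact ⟨r, hr, (lowerEnvelope_le hr).antisymm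
    (le_iInf₂ fun r' hr' => ENNReal.ofReal_le_ofReal (hmin hr'))⟩

lemma lowerSemicontinuous_lowerEnvelope (hK : IsCompact K) :
    LowerSemicontinuous (lowerEnvelope K) := by
  refine lowerSemicontinuous_iff_isClosed_preimage.2 fun s => ?_
  rcases eq_or_ne s ∞ with rfl | hs
  · simp
  have himage : lowerEnvelope K ⁻¹' Set.Iic s =
      Prod.fst '' (K ∩ {t | ENNReal.ofReal t.2 ≤ s}) := by
    ext x
    constructor
    · intro hx
      have hne : ∃ r, (x, r) ∈ K := by
        by_contra! hemp
        exact hs (top_le_iff.1 (by simpa [lowerEnvelope, hemp] using hx))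
      obtain ⟨r, hr, heq⟩ := exists_lowerEnvelope_eq hK hne
      exact ⟨(x, r), ⟨hr, heq.symm.trans_le hx⟩, rfl⟩
    · rintro ⟨⟨x, r⟩, ⟨hr, hrs⟩, rfl⟩
      exact (lowerEnvelope_le hr).trans hrs
  rw [himage]
  exact ((hK.inter_right (isClosed_le (ENNReal.continuous_ofReal.comp continuous_snd)
    continuous_const)).image continuous_fst).isClosed

end Topological

lemma lowerEnvelope_integral_le {E : Type*} [NormedAddCommGroup E] [NormedSpace ℝ E]
    [CompleteSpace E] {K : Set (E × ℝ)} (hK : IsCompact K) (hconv : Convex ℝ K)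
    (hnonneg : ∀ t ∈ K, 0 ≤ t.2) {Ω : Type*} [MeasurableSpace Ω] {κ : Measure Ω}
    [IsProbabilityMeasure κ] {u : Ω → E} (hu : AEStronglyMeasurable u κ)
    (hmem : ∀ᵐ ω ∂κ, ∃ r, (u ω, r) ∈ K) :
    lowerEnvelope K (∫ ω, u ω ∂κ) ≤ ∫⁻ ω, lowerEnvelope K (u ω) ∂κ := by
  borelize E
  have hv : AEMeasurable (fun ω => (lowerEnvelope K (u ω)).toReal) κ :=
    ((lowerSemicontinuous_lowerEnvelope hK).measurable.comp_aemeasurable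
      hu.aemeasurable).ennreal_toReal
  have hgraph : ∀ᵐ ω ∂κ, (u ω, (lowerEnvelope K (u ω)).toReal) ∈ K := by
    filter_upwards [hmem] with ω hω
    obtain ⟨r, hr, heq⟩ := exists_lowerEnvelope_eq hK hω
    rwa [heq, ENNReal.toReal_ofReal (hnonneg _ hr)]
  obtain ⟨C, hC⟩ := hK.isBounded.exists_norm_le
  have hint : Integrable (fun ω => (u ω, (lowerEnvelope K (u ω)).toReal)) κ :=
    .of_bound (hu.prodMk hv.aestronglyMeasurable) C (hgraph.mono fun ω hω => hC _ hω)
  have hbar := hconv.integral_mem hK.isClosed hgraph hint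
  rw [integral_pair hint.fst hint.snd] at hbar
  refine (lowerEnvelope_le hbar).trans ?_
  rw [ofReal_integral_eq_lintegral_ofReal hint.snd (.of_forall fun ω => ENNReal.toReal_nonneg)]
  exact lintegral_mono fun ω => ENNReal.ofReal_toReal_le

end LowerEnvelope

section TransportSet

variable {I : Type*} [Fintype I] [MeasurableSpace I] [MeasurableSingletonClass I]

/-- The set of all (marginals, cost) of probability weights on `I × I`, for the cost function `c`;
weights on a finite space stand for transport plans, so that linear programming applies. -/
def transportSet {I : Type*} [Fintype I] (c : I × I → ℝ) : Set (((I → ℝ) × (I → ℝ)) × ℝ) :=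
  (((LinearMap.pi fun i => ∑ j, LinearMap.proj (i, j)).prod
    (LinearMap.pi fun j => ∑ i, LinearMap.proj (i, j))).prod
      (∑ z, c z • LinearMap.proj z) : (I × I → ℝ) →ₗ[ℝ] _) '' stdSimplex ℝ (I × I)

lemma mem_transportSet {I : Type*} [Fintype I] {c : I × I → ℝ} {a b : I → ℝ} {r : ℝ} :
    ((a, b), r) ∈ transportSet c ↔ ∃ q ∈ stdSimplex ℝ (I × I),
      (∀ i, ∑ j, q (i, j) = a i) ∧ (∀ j, ∑ i, q (i, j) = b j) ∧ ∑ z, c z * q z = r := by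
  simp [transportSet, funext_iff, and_assoc]

lemma isCompact_transportSet {I : Type*} [Fintype I] (c : I × I → ℝ) :
    IsCompact (transportSet c) :=
  (isCompact_stdSimplex ℝ _).image (LinearMap.continuous_of_finiteDimensional _)

lemma convex_transportSet {I : Type*} [Fintype I] (c : I × I → ℝ) : Convex ℝ (transportSet c) :=
  (convex_stdSimplex ℝ _).linear_image _

lemma transportSet_nonneg {I : Type*} [Fintype I] {c : I × I → ℝ} (hc : ∀ z, 0 ≤ c z) :
    ∀ t ∈ transportSet c, 0 ≤ t.2 := by
  rintro ⟨⟨a, b⟩, r⟩ ht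
  obtain ⟨q, hq, -, -, rfl⟩ := mem_transportSet.1 ht
  exact Finset.sum_nonneg fun z _ => mul_nonneg (hc z) (hq.1 z)

lemma exists_isProbabilityMeasure_real_singleton_eq {q : I → ℝ} (hq : q ∈ stdSimplex ℝ I) :
    ∃ π : Measure I, IsProbabilityMeasure π ∧ ∀ i, π.real {i} = q i := by
  classical
  refine ⟨∑ i, ENNReal.ofReal (q i) • Measure.dirac i, ⟨?_⟩, fun i => ?_⟩
  · simp [← ENNReal.ofReal_sum_of_nonneg fun i _ => hq.1 i, hq.2]
  · simp [measureReal_def, Set.indicator_apply, hq.1 i]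

lemma real_map_fst_singleton (π : Measure (I × I)) [IsFiniteMeasure π] (i : I) :
    (π.map Prod.fst).real {i} = ∑ j, π.real {(i, j)} := by
  have hset : Prod.fst ⁻¹' {i} = ⋃ j ∈ (Finset.univ : Finset I), {(i, j)} := by
    ext; simp [eq_comm, Prod.ext_iff]
  rw [map_measureReal_apply measurable_fst (measurableSet_singleton i), hset,
    measureReal_biUnion_finset (by simp [Set.PairwiseDisjoint, Set.Pairwise, Function.onFun])
      fun _ _ => measurableSet_singleton _]

lemma real_map_snd_singleton (π : Measure (I × I)) [IsFiniteMeasure π] (j : I) :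
    (π.map Prod.snd).real {j} = ∑ i, π.real {(i, j)} := by
  have hset : Prod.snd ⁻¹' {j} = ⋃ i ∈ (Finset.univ : Finset I), {(i, j)} := by
    ext; simp [eq_comm, Prod.ext_iff]
  rw [map_measureReal_apply measurable_snd (measurableSet_singleton j), hset,
    measureReal_biUnion_finset (by simp [Set.PairwiseDisjoint, Set.Pairwise, Function.onFun])
      fun _ _ => measurableSet_singleton _]

lemma real_mem_transportSet_iff (c : I × I → ℝ) (μ ν : Measure I) [IsProbabilityMeasure μ]
    [IsFiniteMeasure ν] {r : ℝ} :
    ((fun i => μ.real {i}, fun j => ν.real {j}), r) ∈ transportSet c ↔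
      ∃ π ∈ Cpl μ ν, ∫ z, c z ∂π = r := by
  rw [mem_transportSet]
  constructor
  · rintro ⟨q, hq, hfst, hsnd, hr⟩
    obtain ⟨π, _, hπ⟩ := exists_isProbabilityMeasure_real_singleton_eq hq
    refine ⟨π, ⟨Measure.ext_of_singleton fun i => ?_, Measure.ext_of_singleton fun j => ?_⟩, ?_⟩
    · rw [← measureReal_eq_measureReal_iff, real_map_fst_singleton]
      simp_rw [hπ, hfst]
    · rw [← measureReal_eq_measureReal_iff, real_map_snd_singleton]
      simp_rw [hπ, hsnd]
    · rw [integral_fintype .of_finite, ← hr]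
      simp_rw [hπ, smul_eq_mul, mul_comm]
  · rintro ⟨π, hπ, hr⟩
    have := isProbabilityMeasure_of_mem_Cpl hπ
    refine ⟨fun z => π.real {z}, ⟨fun z => measureReal_nonneg, by simp⟩, fun i => ?_, fun j => ?_,
      ?_⟩
    · rw [← real_map_fst_singleton, hπ.1]
    · rw [← real_map_snd_singleton, hπ.2]
    · rw [← hr, integral_fintype .of_finite]
      simp_rw [smul_eq_mul, mul_comm]

end TransportSet

section WassersteinFintype

lemma measurable_real_singleton {I Ω : Type*} [MeasurableSpace I] [MeasurableSingletonClass I]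
    [MeasurableSpace Ω] (k : Kernel Ω I) : Measurable fun ω i => (k ω).real {i} :=
  measurable_pi_lambda _ fun i =>
    (k.measurable_coe (measurableSet_singleton i)).ennreal_toReal

variable {I : Type*} [Fintype I] [MeasurableSpace I] [MeasurableSingletonClass I] {p : ℝ}
  {d : I → I → ℝ≥0∞} {Ω : Type*} [MeasurableSpace Ω]

lemma Wp_rpow_eq_iInf {A : Type*} [MeasurableSpace A] (hp : 0 < p) (d : A → A → ℝ≥0∞)
    (μ ν : Measure A) : Wp p d μ ν ^ p = ⨅ π ∈ Cpl μ ν, ∫⁻ z, d z.1 z.2 ^ p ∂π := by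
  change ENNReal.orderIsoRpow p hp (Wp p d μ ν) = _
  simp_rw [Wp, OrderIso.map_iInf, ENNReal.orderIsoRpow_apply, one_div,
    ENNReal.rpow_inv_rpow hp.ne']

lemma Wp_rpow_eq_lowerEnvelope (hp : 0 < p) (hd : ∀ i j, d i j ≠ ∞) (μ ν : Measure I)
    [IsProbabilityMeasure μ] [IsFiniteMeasure ν] :
    Wp p d μ ν ^ p = lowerEnvelope (transportSet fun z => (d z.1 z.2 ^ p).toReal)
      (fun i => μ.real {i}, fun j => ν.real {j}) := by
  have cost_eq {π : Measure (I × I)} (hπ : π ∈ Cpl μ ν) :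
      ENNReal.ofReal (∫ z, (d z.1 z.2 ^ p).toReal ∂π) = ∫⁻ z, d z.1 z.2 ^ p ∂π := by
    have := isProbabilityMeasure_of_mem_Cpl hπ
    rw [ofReal_integral_eq_lintegral_ofReal .of_finite
      (.of_forall fun _ => ENNReal.toReal_nonneg)]
    exact lintegral_congr fun z =>
      ENNReal.ofReal_toReal (ENNReal.rpow_ne_top_of_nonneg hp.le (hd _ _))
  rw [Wp_rpow_eq_iInf hp]
  refine le_antisymm (le_iInf₂ fun r hr => ?_) (le_iInf₂ fun π hπ => ?_)
  · obtain ⟨π, hπ, rfl⟩ := (real_mem_transportSet_iff _ μ ν).1 hr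
    exact (iInf₂_le π hπ).trans_eq (cost_eq hπ).symm
  · exact (lowerEnvelope_le ((real_mem_transportSet_iff _ μ ν).2 ⟨π, hπ, rfl⟩)).trans_eq
      (cost_eq hπ)

lemma exists_mem_transportSet (c : I × I → ℝ) (μ ν : Measure I) [IsProbabilityMeasure μ]
    [IsProbabilityMeasure ν] :
    ∃ r, ((fun i => μ.real {i}, fun j => ν.real {j}), r) ∈ transportSet c :=
  ⟨_, (real_mem_transportSet_iff c μ ν).2 ⟨μ.prod ν, ⟨by simp, by simp⟩, rfl⟩⟩

lemma integrable_real_singleton (k : Kernel Ω I) [IsMarkovKernel k] (κ : Measure Ω)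
    [IsFiniteMeasure κ] : Integrable (fun ω i => (k ω).real {i}) κ :=
  .of_bound (measurable_real_singleton k).aestronglyMeasurable 1 <| .of_forall fun ω =>
    (pi_norm_le_iff_of_nonneg zero_le_one).2 fun i => by
      rw [Real.norm_of_nonneg measureReal_nonneg]
      exact measureReal_le_one

lemma integral_real_singleton (k : Kernel Ω I) [IsMarkovKernel k] (κ : Measure Ω)
    [IsFiniteMeasure κ] : ∫ ω, (fun i => (k ω).real {i}) ∂κ = fun i => (k ∘ₘ κ).real {i} := by
  ext i
  rw [eval_integral fun j => (integrable_real_singleton k κ).eval j, measureReal_def,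
    Measure.bind_apply (measurableSet_singleton i) k.measurable.aemeasurable]
  exact integral_toReal (k.measurable_coe (measurableSet_singleton i)).aemeasurable
    (.of_forall fun ω => measure_lt_top _ _)

end WassersteinFintype

section JensenFinite

variable {I : Type*} [Finite I] [MeasurableSpace I] [MeasurableSingletonClass I] {p : ℝ}
  {d : I → I → ℝ≥0∞} {Ω : Type*} [MeasurableSpace Ω] (k₁ k₂ : Kernel Ω I) [IsMarkovKernel k₁]
  [IsMarkovKernel k₂]

lemma measurable_Wp_of_finite (hp : 0 < p) (hd : ∀ i j, d i j ≠ ∞) :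
    Measurable fun ω => Wp p d (k₁ ω) (k₂ ω) := by
  have := Fintype.ofFinite I
  have h : Measurable fun ω => Wp p d (k₁ ω) (k₂ ω) ^ p := by
    simp_rw [Wp_rpow_eq_lowerEnvelope hp hd]
    exact (lowerSemicontinuous_lowerEnvelope (isCompact_transportSet _)).measurable.comp
      ((measurable_real_singleton k₁).prodMk (measurable_real_singleton k₂))
  simpa only [ENNReal.rpow_rpow_inv hp.ne'] using h.pow_const p⁻¹

lemma Wp_comp_rpow_le_of_finite (hp : 0 < p) (hd : ∀ i j, d i j ≠ ∞) (κ : Measure Ω)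
    [IsProbabilityMeasure κ] :
    Wp p d (k₁ ∘ₘ κ) (k₂ ∘ₘ κ) ^ p ≤ ∫⁻ ω, Wp p d (k₁ ω) (k₂ ω) ^ p ∂κ := by
  have := Fintype.ofFinite I
  have h₁ := integrable_real_singleton k₁ κ
  have h₂ := integrable_real_singleton k₂ κ
  simp_rw [Wp_rpow_eq_lowerEnvelope hp hd]
  rw [← integral_real_singleton, ← integral_real_singleton, ← integral_pair h₁ h₂]
  have hK := isCompact_transportSet fun z : I × I => (d z.1 z.2 ^ p).toReal
  exact lowerEnvelope_integral_le hK (convex_transportSet _)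
    (transportSet_nonneg fun z => ENNReal.toReal_nonneg) (h₁.prodMk h₂).aestronglyMeasurable
    (.of_forall fun ω => exists_mem_transportSet _ (k₁ ω) (k₂ ω))

end JensenFinite

section Quantization

lemma Wp_map_map_le_Wp {A B : Type*} [MeasurableSpace A] [MeasurableSpace B] {p : ℝ} (hp : 0 ≤ p)
    (d : B → B → ℝ≥0∞) {r : A → B} (hr : Measurable r) (μ ν : Measure A) :
    Wp p d (μ.map r) (ν.map r) ≤ Wp p (fun x y => d (r x) (r y)) μ ν := by
  refine le_iInf₂ fun π hπ => ?_
  rw [← hπ.1, ← hπ.2, Measure.map_map hr measurable_fst, Measure.map_map hr measurable_snd]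
  exact Wp_map_map_le hp (hr.comp measurable_fst) (hr.comp measurable_snd) π

lemma measurable_codRestrict_range {B : Type*} [MeasurableSpace B] (f : SimpleFunc B B) :
    Measurable (Set.codRestrict f f.range f.mem_range_self) :=
  f.measurable.codRestrict _

variable {B : Type*} [MetricSpace B] [MeasurableSpace B] {p : ℝ} {m n : Measure B} {Ω : Type*}
  [MeasurableSpace Ω] {κ : Measure Ω}

/-- The Wasserstein distance of the images of `m` and `n` under a simple function `f`, computed on
the finite range of `f`. -/
def quantWp (p : ℝ) (f : SimpleFunc B B) (m n : Measure B) : ℝ≥0∞ :=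
  Wp p (fun i j : f.range => edist (i : B) j) (m.map (Set.codRestrict f f.range f.mem_range_self))
    (n.map (Set.codRestrict f f.range f.mem_range_self))

/-- The `L^p(m)`-distance of a simple function to the identity, which bounds the error made in
replacing `m` by its image. -/
def quantError (p : ℝ) (f : SimpleFunc B B) (m : Measure B) : ℝ≥0∞ :=
  (∫⁻ x, edist x (f x) ^ p ∂m) ^ (1 / p)

lemma quantWp_eq_Wp_map_kernel (f : SimpleFunc B B) (k₁ k₂ : Kernel Ω B) (ω : Ω) :
    quantWp p f (k₁ ω) (k₂ ω) = Wp p (fun i j : f.range => edist (i : B) j)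
      (k₁.map (Set.codRestrict f f.range f.mem_range_self) ω)
      (k₂.map (Set.codRestrict f f.range f.mem_range_self) ω) := by
  rw [Kernel.map_apply _ (measurable_codRestrict_range f),
    Kernel.map_apply _ (measurable_codRestrict_range f), quantWp]

lemma Wp_map_simpleFunc_le (hp : 0 ≤ p) (f : SimpleFunc B B) (m : Measure B) :
    Wp p edist m (m.map f) ≤ quantError p f m := by
  simpa only [Measure.map_id, id, quantError] using Wp_map_map_le hp measurable_id f.measurable m

variable [SecondCountableTopology B] [BorelSpace B]

lemma measurable_quantWp (hp : 0 < p) (f : SimpleFunc B B) (k₁ k₂ : Kernel Ω B)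
    [IsMarkovKernel k₁] [IsMarkovKernel k₂] :
    Measurable fun ω => quantWp p f (k₁ ω) (k₂ ω) := by
  have hq := measurable_codRestrict_range f
  have := Kernel.IsMarkovKernel.map k₁ hq
  have := Kernel.IsMarkovKernel.map k₂ hq
  simp_rw [quantWp_eq_Wp_map_kernel]
  exact measurable_Wp_of_finite _ _ hp fun i j => edist_ne_top _ _

lemma quantWp_comp_rpow_le (hp : 0 < p) (f : SimpleFunc B B) (k₁ k₂ : Kernel Ω B)
    [IsMarkovKernel k₁] [IsMarkovKernel k₂] [IsProbabilityMeasure κ] :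
    quantWp p f (k₁ ∘ₘ κ) (k₂ ∘ₘ κ) ^ p ≤ ∫⁻ ω, quantWp p f (k₁ ω) (k₂ ω) ^ p ∂κ := by
  have hq := measurable_codRestrict_range f
  have := Kernel.IsMarkovKernel.map k₁ hq
  have := Kernel.IsMarkovKernel.map k₂ hq
  simp_rw [quantWp_eq_Wp_map_kernel]
  rw [quantWp, Measure.map_comp _ _ hq, Measure.map_comp _ _ hq]
  exact Wp_comp_rpow_le_of_finite _ _ hp (fun i j => edist_ne_top _ _) κ

lemma quantError_comp (hp : 0 < p) (f : SimpleFunc B B) (k : Kernel Ω B) :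
    quantError p f (k ∘ₘ κ) = (∫⁻ ω, quantError p f (k ω) ^ p ∂κ) ^ (1 / p) := by
  simp_rw [quantError, one_div, ENNReal.rpow_inv_rpow hp.ne']
  rw [Measure.lintegral_bind k.measurable.aemeasurable (by fun_prop)]

lemma quantWp_le (hp : 1 ≤ p) (f : SimpleFunc B B) (m n : Measure B) :
    quantWp p f m n ≤ quantError p f m + Wp p edist m n + quantError p f n := by
  have hf := f.measurable
  conv_rhs => rw [Wp]
  simp_rw [ENNReal.add_iInf, ENNReal.iInf_add]
  refine le_iInf₂ fun π hπ => ?_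
  have hq := measurable_codRestrict_range f
  calc quantWp p f m n ≤ (∫⁻ z, edist (f z.1) (f z.2) ^ p ∂π) ^ (1 / p) := by
        rw [quantWp, ← hπ.1, ← hπ.2, Measure.map_map hq measurable_fst,
          Measure.map_map hq measurable_snd]
        exact Wp_map_map_le (by positivity) (hq.comp measurable_fst) (hq.comp measurable_snd) π
    _ ≤ (∫⁻ z, (edist z.1 (f z.1) + edist z.1 z.2 + edist z.2 (f z.2)) ^ p ∂π) ^ (1 / p) := by
        gcongr with z
        rw [edist_comm z.1 (f z.1)]
        exact edist_triangle4 _ _ _ _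
    _ ≤ (∫⁻ z, edist z.1 (f z.1) ^ p ∂π) ^ (1 / p) + (∫⁻ z, edist z.1 z.2 ^ p ∂π) ^ (1 / p) +
          (∫⁻ z, edist z.2 (f z.2) ^ p ∂π) ^ (1 / p) :=
        lintegral_Lp_add_add_le hp (by fun_prop) (by fun_prop) (by fun_prop)
    _ = _ := by
        rw [quantError, quantError,
          lintegral_fst_of_mem_Cpl hπ (f := fun x => edist x (f x) ^ p) (by fun_prop),
          lintegral_snd_of_mem_Cpl hπ (f := fun x => edist x (f x) ^ p) (by fun_prop)]

variable [CompleteSpace B]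

lemma Wp_le_quantWp (hp : 1 ≤ p) (f : SimpleFunc B B) (m n : Measure B)
    [IsProbabilityMeasure m] [IsProbabilityMeasure n] :
    Wp p edist m n ≤ quantError p f m + quantWp p f m n + quantError p f n := by
  have hp₀ : 0 ≤ p := by positivity
  have (m : Measure B) [IsProbabilityMeasure m] : IsProbabilityMeasure (m.map f) :=
    Measure.isProbabilityMeasure_map f.measurable.aemeasurable
  have hmid : Wp p edist (m.map f) (n.map f) ≤ quantWp p f m n := by
    have hq := measurable_codRestrict_range f
    have hmap (m : Measure B) : m.map f =
        (m.map (Set.codRestrict f f.range f.mem_range_self)).map Subtype.val :=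
      (Measure.map_map measurable_subtype_coe hq).symm
    rw [hmap, hmap]
    exact Wp_map_map_le_Wp hp₀ edist measurable_subtype_coe _ _
  calc Wp p edist m n ≤ Wp p edist m (m.map f) + Wp p edist (m.map f) (n.map f) +
        Wp p edist (n.map f) n :=
        (Wp_edist_triangle hp _ (n.map f) _).trans
          (add_le_add_left (Wp_edist_triangle hp _ (m.map f) _) _)
    _ ≤ _ := by
        rw [Wp_comm edist_comm (n.map f)]
        gcongr
        exacts [Wp_map_simpleFunc_le hp₀ f m, Wp_map_simpleFunc_le hp₀ f n]

lemma tendsto_quantError [Nonempty B] (hp : 1 ≤ p) (hm : MemPp p edist m) :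
    Tendsto (fun N => quantError p (SimpleFunc.nearestPt (TopologicalSpace.denseSeq B) N) m)
      atTop (𝓝 0) := by
  have hp₀ : 0 < p := by positivity
  set e := TopologicalSpace.denseSeq B
  have hpt (x : B) :
      Tendsto (fun N => edist x (SimpleFunc.nearestPt e N x) ^ p) atTop (𝓝 0) := by
    have := tendsto_iff_edist_tendsto_0.1 (SimpleFunc.tendsto_nearestPt (e := e) (x := x)
      ((TopologicalSpace.denseRange_denseSeq B).closure_range ▸ Set.mem_univ x))
    simp_rw [edist_comm x]
    simpa [ENNReal.zero_rpow_of_pos hp₀] using this.ennrpow_const p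
  have hlim := tendsto_lintegral_of_dominated_convergence (μ := m) (fun x => edist (e 0) x ^ p)
    (fun N => (by fun_prop : Measurable fun x => edist x (SimpleFunc.nearestPt e N x) ^ p))
    (fun N => .of_forall fun x => ENNReal.rpow_le_rpow
      ((edist_comm _ _).trans_le (SimpleFunc.edist_nearestPt_le e x (Nat.zero_le N))) hp₀.le)
    (hm.lintegral_edist_rpow_ne_top hp (e 0)) (.of_forall hpt)
  simpa [quantError, ENNReal.zero_rpow_of_pos (inv_pos.2 hp₀)] using hlim.ennrpow_const (1 / p)

lemma tendsto_quantWp [Nonempty B] (hp : 1 ≤ p) (hm : MemPp p edist m) (hn : MemPp p edist n) :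
    Tendsto (fun N => quantWp p (SimpleFunc.nearestPt (TopologicalSpace.denseSeq B) N) m n)
      atTop (𝓝 (Wp p edist m n)) := by
  have := hm.1
  have := hn.1
  have hm' := tendsto_quantError hp hm
  have hn' := tendsto_quantError hp hn
  have hupper := (hm'.add (tendsto_const_nhds (x := Wp p edist m n))).add hn'
  have hlower := ENNReal.Tendsto.sub (tendsto_const_nhds (x := Wp p edist m n)) (hm'.add hn')
    (Or.inr (by simp))
  simp only [zero_add, add_zero, tsub_zero] at hupper hlower
  refine tendsto_of_tendsto_of_tendsto_of_le_of_le hlower hupper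
    (fun N => tsub_le_iff_right.2 ?_) (fun N => quantWp_le hp _ m n)
  exact (Wp_le_quantWp hp _ m n).trans_eq (by ring)

end Quantization

section Jensen

variable {B : Type*} [MetricSpace B] [CompleteSpace B] [SecondCountableTopology B]
  [MeasurableSpace B] [BorelSpace B] [Nonempty B] {Ω : Type*} [MeasurableSpace Ω] {p : ℝ}

variable (k₁ k₂ : Kernel Ω B) [IsMarkovKernel k₁] [IsMarkovKernel k₂] {κ : Measure Ω}

lemma aemeasurable_Wp (hp : 1 ≤ p) (h₁ : ∀ᵐ ω ∂κ, MemPp p edist (k₁ ω))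
    (h₂ : ∀ᵐ ω ∂κ, MemPp p edist (k₂ ω)) :
    AEMeasurable (fun ω => Wp p edist (k₁ ω) (k₂ ω)) κ := by
  refine aemeasurable_of_tendsto_metrizable_ae atTop
    (fun N => (measurable_quantWp (by positivity)
      (SimpleFunc.nearestPt (TopologicalSpace.denseSeq B) N) k₁ k₂).aemeasurable) ?_
  filter_upwards [h₁, h₂] with ω hω₁ hω₂ using tendsto_quantWp hp hω₁ hω₂

lemma ae_memPp_of_comp (hp : 1 ≤ p) (k : Kernel Ω B) [IsMarkovKernel k]
    (h : MemPp p edist (k ∘ₘ κ)) : ∀ᵐ ω ∂κ, MemPp p edist (k ω) := by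
  obtain ⟨x⟩ := ‹Nonempty B›
  have hx := h.lintegral_edist_rpow_ne_top hp x
  rw [Measure.lintegral_bind k.measurable.aemeasurable (by fun_prop)] at hx
  filter_upwards [ae_lt_top (Measurable.lintegral_kernel (by fun_prop)) hx] with ω hω
  exact ⟨inferInstance, x, hω.ne⟩

lemma Wp_comp_le (hp : 1 ≤ p) [IsProbabilityMeasure κ] (h₁ : MemPp p edist (k₁ ∘ₘ κ))
    (h₂ : MemPp p edist (k₂ ∘ₘ κ)) :
    Wp p edist (k₁ ∘ₘ κ) (k₂ ∘ₘ κ) ≤ (∫⁻ ω, Wp p edist (k₁ ω) (k₂ ω) ^ p ∂κ) ^ (1 / p) := by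
  have hp₀ : 0 < p := by positivity
  have hW := aemeasurable_Wp k₁ k₂ hp (ae_memPp_of_comp hp k₁ h₁) (ae_memPp_of_comp hp k₂ h₂)
  have herr (f : SimpleFunc B B) (k : Kernel Ω B) :
      AEMeasurable (fun ω => quantError p f (k ω)) κ := by
    have hf := f.measurable
    exact ((Measurable.lintegral_kernel (by fun_prop)).pow_const _).aemeasurable
  set e := TopologicalSpace.denseSeq B
  have hbound (N : ℕ) : quantWp p (SimpleFunc.nearestPt e N) (k₁ ∘ₘ κ) (k₂ ∘ₘ κ) ≤
      quantError p (SimpleFunc.nearestPt e N) (k₁ ∘ₘ κ) +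
        (∫⁻ ω, Wp p edist (k₁ ω) (k₂ ω) ^ p ∂κ) ^ (1 / p) +
          quantError p (SimpleFunc.nearestPt e N) (k₂ ∘ₘ κ) := by
    set f := SimpleFunc.nearestPt e N
    calc quantWp p f (k₁ ∘ₘ κ) (k₂ ∘ₘ κ)
        ≤ (∫⁻ ω, quantWp p f (k₁ ω) (k₂ ω) ^ p ∂κ) ^ (1 / p) := by
          rw [one_div, ENNReal.le_rpow_inv_iff hp₀]
          exact quantWp_comp_rpow_le hp₀ f k₁ k₂
      _ ≤ (∫⁻ ω, (quantError p f (k₁ ω) + Wp p edist (k₁ ω) (k₂ ω) +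
            quantError p f (k₂ ω)) ^ p ∂κ) ^ (1 / p) := by
          gcongr
          exact quantWp_le hp f _ _
      _ ≤ _ := by
          rw [quantError_comp hp₀, quantError_comp hp₀]
          exact lintegral_Lp_add_add_le hp (herr f k₁) hW (herr f k₂)
  exact le_of_tendsto_of_tendsto' (tendsto_quantWp hp h₁ h₂) (by
    simpa using ((tendsto_quantError hp h₁).add tendsto_const_nhds).add
      (tendsto_quantError hp h₂)) hbound

end Jensen

section Disintegration

lemma isRatStieltjesPoint_cdf (m : Measure ℝ) :
    IsRatStieltjesPoint (fun f : ℚ → ℝ => f) (fun q : ℚ => cdf m q) where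
  mono := fun a b h => monotone_cdf m (by exact_mod_cast h)
  tendsto_atTop_one := (tendsto_cdf_atTop m).comp (tendsto_ratCast_atTop_iff.2 tendsto_id)
  tendsto_atBot_zero := (tendsto_cdf_atBot m).comp (tendsto_ratCast_atBot_iff.2 tendsto_id)
  iInf_rat_gt_eq := fun t => by
    change ⨅ r : Set.Ioi t, cdf m ((r : ℚ) : ℝ) = cdf m (t : ℝ)
    rw [← StieltjesFunction.iInf_rat_gt_eq (cdf m) (t : ℝ)]
    exact Equiv.iInf_congr (Equiv.subtypeEquivRight fun x => by simp) fun x => rfl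

lemma measure_stieltjesOfMeasurableRat_cdf (m : Measure ℝ) [IsProbabilityMeasure m] :
    (stieltjesOfMeasurableRat (fun f : ℚ → ℝ => f) measurable_id
      (fun q : ℚ => cdf m q)).measure = m := by
  conv_rhs => rw [← measure_cdf m]
  congr 1
  ext x
  rw [← StieltjesFunction.iInf_rat_gt_eq, ← StieltjesFunction.iInf_rat_gt_eq (cdf m)]
  refine iInf_congr fun r => ?_
  rw [stieltjesOfMeasurableRat_eq, toRatCDF_of_isRatStieltjesPoint (isRatStieltjesPoint_cdf m)]

variable {A B E S : Type*} [MeasurableSpace A] [MeasurableSpace B] [MeasurableSpace E]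
  [MeasurableSpace S]

-- A probability measure on a standard Borel space is encoded by the rational values of the
-- distribution function of its image in `ℝ`.
lemma exists_measurable_retraction_measure (B : Type*) [MeasurableSpace B]
    [StandardBorelSpace B] [Nonempty B] :
    ∃ (i : Measure B → ℚ → ℝ) (r : (ℚ → ℝ) → Measure B), Measurable i ∧ Measurable r ∧
      ∀ m : Measure B, IsProbabilityMeasure m → r (i m) = m := by
  have he := measurableEmbedding_embeddingReal B
  refine ⟨fun m q => (m.map (embeddingReal B)).real (Set.Iic q),
    fun f => (stieltjesOfMeasurableRat (fun f : ℚ → ℝ => f) measurable_id f).measure.map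
      he.invFun,
    measurable_pi_lambda _ fun q => ((Measure.measurable_coe measurableSet_Iic).comp
      (Measure.measurable_map _ he.measurable)).ennreal_toReal,
    (Measure.measurable_map _ he.measurable_invFun).comp
      (measurable_measure_stieltjesOfMeasurableRat measurable_id), fun m hm => ?_⟩
  have := Measure.isProbabilityMeasure_map (μ := m) he.measurable.aemeasurable
  simp only [← cdf_eq_real]
  rw [measure_stieltjesOfMeasurableRat_cdf, Measure.map_map he.measurable_invFun he.measurable,
    he.leftInverse_invFun.comp_eq_id, Measure.map_id]

lemma exists_markovKernel_compProd_eq_of_retraction [StandardBorelSpace S]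
    (γ : Measure (A × E)) [IsProbabilityMeasure γ] {i : E → S} (hi : Measurable i)
    {r : S → E} (hr : Measurable r) (hri : ∀ᵐ z ∂γ, r (i z.2) = z.2) :
    ∃ K : Kernel A E, IsMarkovKernel K ∧ γ.fst ⊗ₘ K = γ := by
  have hi' : Measurable (Prod.map (id : A → A) i) := measurable_id.prodMap hi
  set γ' := γ.map (Prod.map id i) with hγ'
  have : IsProbabilityMeasure γ' := Measure.isProbabilityMeasure_map hi'.aemeasurable
  have : Nonempty S := (nonempty_of_isProbabilityMeasure γ').map Prod.snd
  have hfst : γ'.fst = γ.fst := Measure.map_map measurable_fst hi'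
  have hae : Prod.map id r ∘ Prod.map id i =ᵐ[γ] id := by
    filter_upwards [hri] with z hz using Prod.ext rfl hz
  refine ⟨γ'.condKernel.map r, Kernel.IsMarkovKernel.map _ hr, ?_⟩
  rw [Measure.compProd_map hr, ← hfst, γ'.disintegrate γ'.condKernel, hγ',
    Measure.map_map (measurable_id.prodMap hr) hi', Measure.map_congr hae, Measure.map_id]

lemma exists_markovKernel_compProd_eq [StandardBorelSpace E] [StandardBorelSpace B] [Nonempty B]
    (γ : Measure (A × (E × Measure B))) [IsProbabilityMeasure γ]
    (h : ∀ᵐ z ∂γ, IsProbabilityMeasure z.2.2) :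
    ∃ K : Kernel A (E × Measure B), IsMarkovKernel K ∧ γ.fst ⊗ₘ K = γ := by
  obtain ⟨i, r, hi, hr, hri⟩ := exists_measurable_retraction_measure B
  refine exists_markovKernel_compProd_eq_of_retraction γ (measurable_id.prodMap hi)
    (measurable_id.prodMap hr) ?_
  filter_upwards [h] with z hz using Prod.ext rfl (hri _ hz)

end Disintegration

section CondBar

variable {A B : Type*} [MeasurableSpace A] [MeasurableSpace B]

lemma swap_compProd_mem_Cpl {E F : Type*} [MeasurableSpace E] [MeasurableSpace F] (ν : Measure F)
    [SFinite ν] (K : Kernel F E) [IsMarkovKernel K] :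
    (ν ⊗ₘ K).map Prod.swap ∈ Cpl (K ∘ₘ ν) ν :=
  swap_mem_Cpl ⟨Measure.fst_compProd _ _, Measure.snd_compProd _ _⟩

lemma setLIntegral_swap_compProd {E F : Type*} [MeasurableSpace E] [MeasurableSpace F]
    (ν : Measure F) [SFinite ν] (K : Kernel F E) [IsSFiniteKernel K] {f : E × F → ℝ≥0∞}
    (hf : Measurable f) {S : Set F} (hS : MeasurableSet S) :
    ∫⁻ z in Prod.snd ⁻¹' S, f z ∂(ν ⊗ₘ K).map Prod.swap = ∫⁻ y in S, ∫⁻ x, f (x, y) ∂K y ∂ν := by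
  have hpre : (Prod.swap ⁻¹' (Prod.snd ⁻¹' S) : Set (F × E)) = S ×ˢ Set.univ := by ext; simp
  rw [setLIntegral_map (measurable_snd hS) hf measurable_swap, hpre,
    Measure.setLIntegral_compProd (f := fun w => f w.swap) (hf.comp measurable_swap) hS .univ]
  simp

lemma exists_markovKernel_of_mem_Cpl [StandardBorelSpace A] [StandardBorelSpace B] [Nonempty B]
    {E : Type*} [MeasurableSpace E]
    {μ : Measure (A × Measure B)} [IsProbabilityMeasure μ] {ν : Measure E}
    (hμ : ∀ᵐ z ∂μ, IsProbabilityMeasure z.2) {γ : Measure ((A × Measure B) × E)}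
    (hγ : γ ∈ Cpl μ ν) :
    ∃ K : Kernel E (A × Measure B), IsMarkovKernel K ∧ K ∘ₘ ν = μ ∧
      (ν ⊗ₘ K).map Prod.swap = γ := by
  have hγ' := swap_mem_Cpl hγ
  have := isProbabilityMeasure_of_mem_Cpl hγ
  have := Measure.isProbabilityMeasure_map (μ := γ) measurable_swap.aemeasurable
  obtain ⟨K, hK, hKγ⟩ := exists_markovKernel_compProd_eq (γ.map Prod.swap)
    (ae_of_ae_map measurable_snd.aemeasurable (by rwa [hγ'.2]))
  have hfst : (γ.map Prod.swap).fst = ν := hγ'.1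
  rw [hfst] at hKγ
  refine ⟨K, hK, ?_, ?_⟩
  · have : SFinite ν := by rw [← hγ'.1]; infer_instance
    rw [← Measure.snd_compProd, hKγ]
    exact hγ'.2
  · rw [hKγ, Measure.map_map measurable_swap measurable_swap, Prod.swap_swap_eq, Measure.map_id]

lemma IsCondBar.ae_eq [MeasurableSpace.CountablyGenerated B]
    {γ : Measure ((A × Measure B) × (A × Measure B))} [IsFiniteMeasure γ]
    {η η' : (A × Measure B) × (A × Measure B) → Measure B} (h : IsCondBar γ η)
    (h' : IsCondBar γ η') : η =ᵐ[γ] η' := by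
  obtain ⟨⟨g, hg, hgη⟩, hprob, hint⟩ := h
  obtain ⟨⟨g', hg', hgη'⟩, hprob', hint'⟩ := h'
  simp only [hgη, hgη'] at hprob hprob' hint hint'
  let k : Kernel (A × Measure B) B := ⟨g, hg⟩
  let k' : Kernel (A × Measure B) B := ⟨g', hg'⟩
  have : IsMarkovKernel k := ⟨fun y => hprob (y, y)⟩
  have : IsMarkovKernel k' := ⟨fun y => hprob' (y, y)⟩
  have hcomp : γ.snd ⊗ₘ k = γ.snd ⊗ₘ k' := by
    refine Measure.ext_prod fun {S E} hS hE => ?_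
    rw [Measure.compProd_apply_prod hS hE, Measure.compProd_apply_prod hS hE, Measure.snd,
      setLIntegral_map hS (Kernel.measurable_coe _ hE) measurable_snd,
      setLIntegral_map hS (Kernel.measurable_coe _ hE) measurable_snd]
    exact (hint S hS E hE).trans (hint' S hS E hE).symm
  filter_upwards [ae_of_ae_map measurable_snd.aemeasurable (Kernel.ae_eq_of_compProd_eq hcomp)]
    with z hz
  rw [hgη, hgη']
  exact hz

variable [Nonempty B]

open Classical in
/-- The kernel `(x, m) ↦ m`, made Markov by an arbitrary choice where `m` is not a probability
measure. Composing it with a kernel into `A × Measure B` averages the measures: `evalKernel ∘ₖ K`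
is the barycenter of the second component of `K`. -/
def evalKernel (A B : Type*) [MeasurableSpace A] [MeasurableSpace B] [Nonempty B] :
    Kernel (A × Measure B) B where
  toFun z := if z.2 Set.univ = 1 then z.2 else Measure.dirac (Classical.arbitrary B)
  measurable' := Measurable.ite
    ((Measure.measurable_coe MeasurableSet.univ).comp measurable_snd (measurableSet_singleton 1))
    measurable_snd measurable_const

instance : IsMarkovKernel (evalKernel A B) := ⟨fun z => by
  change IsProbabilityMeasure (ite _ _ _)
  split_ifs with h
  · exact ⟨h⟩
  · infer_instance⟩

lemma evalKernel_apply {z : A × Measure B} (h : IsProbabilityMeasure z.2) :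
    evalKernel A B z = z.2 :=
  if_pos h.measure_univ

lemma isCondBar_comp_evalKernel {ν : Measure (A × Measure B)} [SFinite ν]
    {K : Kernel (A × Measure B) (A × Measure B)} [IsMarkovKernel K]
    (h : ∀ᵐ z ∂(K ∘ₘ ν), IsProbabilityMeasure z.2) :
    IsCondBar ((ν ⊗ₘ K).map Prod.swap) (fun z => (evalKernel A B ∘ₖ K) z.2) := by
  refine ⟨⟨_, (evalKernel A B ∘ₖ K).measurable, fun z => rfl⟩, fun z => inferInstance,
    fun S hS E hE => ?_⟩
  have hfst : ∀ᵐ z ∂(ν ⊗ₘ K).map Prod.swap, z.1.2 E = evalKernel A B z.1 E := by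
    rw [← (swap_compProd_mem_Cpl ν K).1] at h
    filter_upwards [ae_of_ae_map measurable_fst.aemeasurable h] with z hz
    rw [evalKernel_apply hz]
  rw [lintegral_congr_ae (ae_restrict_of_ae hfst)]
  have hbar := setLIntegral_swap_compProd ν K
    (((evalKernel A B ∘ₖ K).measurable_coe hE).comp measurable_snd) hS
  have heval := setLIntegral_swap_compProd ν K
    (((evalKernel A B).measurable_coe hE).comp measurable_fst) hS
  refine hbar.trans (Eq.trans ?_ heval.symm)
  simp [Kernel.comp_apply' _ _ _ hE]

end CondBar

section Costs

variable {A B E : Type*} [MeasurableSpace A] [MeasurableSpace B] [MeasurableSpace E] {p : ℝ}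

/-- The `𝒳₁`-part `E[ρ(X₁, Y₁)^p]` of the cost of a coupling, given as the law `ν` of `Y⃗` and the
conditional law `K` of `(X₁, X̂₂)` given `Y⃗`. -/
def baseCost [EDist A] (p : ℝ) (ν : Measure (A × E)) (K : Kernel (A × E) (A × E)) : ℝ≥0∞ :=
  ∫⁻ w, edist w.2.1 w.1.1 ^ p ∂(ν ⊗ₘ K)

/-- The `𝒳₂`-part `E[W_p(E[X̂₂ | Y⃗], Ŷ₂)^p]` of the causal cost of a coupling, given as the law
`ν` of `Y⃗` and the conditional law `K` of `(X₁, X̂₂)` given `Y⃗`. -/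
def fiberCost [EDist B] [Nonempty B] (p : ℝ) (ν : Measure (A × Measure B))
    (K : Kernel (A × Measure B) (A × Measure B)) : ℝ≥0∞ :=
  ∫⁻ y, Wp p edist ((evalKernel A B ∘ₖ K) y) (evalKernel A B y) ^ p ∂ν

section Base

variable [PseudoEMetricSpace A] [SecondCountableTopology A] [OpensMeasurableSpace A]

lemma baseCost_comp_rpow_le (hp : 1 ≤ p) (lam : Measure (A × E)) [SFinite lam]
    (K₁ K₂ : Kernel (A × E) (A × E)) [IsMarkovKernel K₁] [IsMarkovKernel K₂] :
    baseCost p lam (K₁ ∘ₖ K₂) ^ (1 / p) ≤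
      baseCost p (K₂ ∘ₘ lam) K₁ ^ (1 / p) + baseCost p lam K₂ ^ (1 / p) := by
  set θ := (lam ⊗ₘ K₂) ⊗ₘ K₁.comap Prod.snd measurable_snd with hθ
  have h₁₃ : baseCost p lam (K₁ ∘ₖ K₂) = ∫⁻ w, edist w.2.1 w.1.1.1 ^ p ∂θ := by
    rw [baseCost, Measure.lintegral_compProd (by fun_prop), hθ,
      Measure.lintegral_compProd (by fun_prop), Measure.lintegral_compProd]
    · exact lintegral_congr fun z => Kernel.lintegral_comp _ _ _ (by fun_prop)
    · exact Measurable.lintegral_kernel_prod_right'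
        (f := fun w : ((A × E) × (A × E)) × (A × E) =>
          edist w.2.1 w.1.1.1 ^ p) (by fun_prop)
  have h₂₃ : baseCost p lam K₂ = ∫⁻ w, edist w.1.2.1 w.1.1.1 ^ p ∂θ := by
    have hfst : θ.map Prod.fst = lam ⊗ₘ K₂ := Measure.fst_compProd _ _
    rw [baseCost, ← hfst, lintegral_map (by fun_prop) measurable_fst]
  have h₁₂ : baseCost p (K₂ ∘ₘ lam) K₁ = ∫⁻ w, edist w.2.1 w.1.2.1 ^ p ∂θ := by
    rw [baseCost, ← Measure.snd_compProd, Measure.snd,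
      ← map_compProd_comap (lam ⊗ₘ K₂) K₁ measurable_snd,
      lintegral_map (by fun_prop) (by fun_prop)]
  rw [h₁₂, h₂₃, h₁₃]
  calc (∫⁻ w, edist w.2.1 w.1.1.1 ^ p ∂θ) ^ (1 / p)
      ≤ (∫⁻ w, (edist w.2.1 w.1.2.1 + edist w.1.2.1 w.1.1.1) ^ p ∂θ) ^ (1 / p) := by
        gcongr
        exact edist_triangle _ _ _
    _ ≤ _ := ENNReal.lintegral_Lp_add_le (by fun_prop) (by fun_prop) hp

lemma baseCost_eq_lintegral_swap (p : ℝ) (ν : Measure (A × E))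
    (K : Kernel (A × E) (A × E)) :
    baseCost p ν K = ∫⁻ z, edist z.1.1 z.2.1 ^ p ∂(ν ⊗ₘ K).map Prod.swap := by
  rw [lintegral_map (by fun_prop) measurable_swap]
  rfl

end Base

section Fiber

variable [MetricSpace B] [CompleteSpace B] [SecondCountableTopology B] [BorelSpace B]
  [Nonempty B] {ν lam : Measure (A × Measure B)}
  {K : Kernel (A × Measure B) (A × Measure B)} [IsMarkovKernel K]

lemma ae_memPp_comp_evalKernel (hp : 1 ≤ p) (h : MemPp p edist (evalKernel A B ∘ₘ (K ∘ₘ ν))) :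
    ∀ᵐ y ∂ν, MemPp p edist ((evalKernel A B ∘ₖ K) y) := by
  rw [Measure.comp_assoc] at h
  exact ae_memPp_of_comp hp _ h

lemma aemeasurable_Wp_comp_evalKernel (hp : 1 ≤ p)
    (hμ : MemPp p edist (evalKernel A B ∘ₘ (K ∘ₘ ν)))
    (hν : MemPp p edist (evalKernel A B ∘ₘ ν)) :
    AEMeasurable (fun y => Wp p edist ((evalKernel A B ∘ₖ K) y) (evalKernel A B y)) ν :=
  aemeasurable_Wp _ _ hp (ae_memPp_comp_evalKernel hp hμ) (ae_memPp_of_comp hp _ hν)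

lemma fiberCost_comp_rpow_le (hp : 1 ≤ p) {K₁ K₂ : Kernel (A × Measure B) (A × Measure B)}
    [IsMarkovKernel K₁] [IsMarkovKernel K₂]
    (hμ : MemPp p edist (evalKernel A B ∘ₘ (K₁ ∘ₘ (K₂ ∘ₘ lam))))
    (hν : MemPp p edist (evalKernel A B ∘ₘ (K₂ ∘ₘ lam)))
    (hlam : MemPp p edist (evalKernel A B ∘ₘ lam)) :
    fiberCost p lam (K₁ ∘ₖ K₂) ^ (1 / p) ≤
      fiberCost p (K₂ ∘ₘ lam) K₁ ^ (1 / p) + fiberCost p lam K₂ ^ (1 / p) := by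
  have hμ' : MemPp p edist (evalKernel A B ∘ₘ ((K₁ ∘ₖ K₂) ∘ₘ lam)) := by
    rwa [← Measure.comp_assoc (μ := lam)]
  have hmem₁ := ae_memPp_comp_evalKernel hp hμ'
  have hmem₂ := ae_memPp_comp_evalKernel hp hν
  have hjensen : ∫⁻ z, Wp p edist ((evalKernel A B ∘ₖ (K₁ ∘ₖ K₂)) z)
      ((evalKernel A B ∘ₖ K₂) z) ^ p ∂lam ≤ fiberCost p (K₂ ∘ₘ lam) K₁ := by
    have hmeas := (aemeasurable_Wp_comp_evalKernel (K := K₁) hp hμ hν).pow_const p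
    have hbind := Measure.lintegral_bind K₂.aemeasurable hmeas
    rw [fiberCost, hbind]
    refine lintegral_mono_ae ?_
    filter_upwards [hmem₁, hmem₂] with z hz₁ hz₂
    rw [← Kernel.comp_assoc, Kernel.comp_apply] at hz₁ ⊢
    rw [Kernel.comp_apply] at hz₂ ⊢
    rw [← ENNReal.le_rpow_inv_iff (by positivity), ← one_div]
    exact Wp_comp_le _ _ hp hz₁ hz₂
  calc fiberCost p lam (K₁ ∘ₖ K₂) ^ (1 / p)
      ≤ (∫⁻ z, (Wp p edist ((evalKernel A B ∘ₖ (K₁ ∘ₖ K₂)) z) ((evalKernel A B ∘ₖ K₂) z) +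
          Wp p edist ((evalKernel A B ∘ₖ K₂) z) (evalKernel A B z)) ^ p ∂lam) ^ (1 / p) := by
        rw [fiberCost]
        gcongr
        exact Wp_edist_triangle hp _ _ _
    _ ≤ _ := ENNReal.lintegral_Lp_add_le (aemeasurable_Wp _ _ hp hmem₁ hmem₂)
        (aemeasurable_Wp_comp_evalKernel hp hν hlam) hp
    _ ≤ _ := add_le_add_left (ENNReal.rpow_le_rpow hjensen (by positivity)) _

lemma fiberCost_le_lintegral (hp : 1 ≤ p) [SFinite ν]
    (hμ : MemPp p edist (evalKernel A B ∘ₘ (K ∘ₘ ν)))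
    (hν : MemPp p edist (evalKernel A B ∘ₘ ν)) :
    fiberCost p ν K ≤
      ∫⁻ w, Wp p edist (evalKernel A B w.2) (evalKernel A B w.1) ^ p ∂(ν ⊗ₘ K) := by
  have hmeas : AEMeasurable
      (fun w => Wp p edist (evalKernel A B w.2) (evalKernel A B w.1)) (ν ⊗ₘ K) := by
    have hfst := (Measure.fst_compProd ν K).symm ▸ ae_memPp_of_comp hp _ hν
    have hsnd := (Measure.snd_compProd ν K).symm ▸ ae_memPp_of_comp hp _ hμ
    exact aemeasurable_Wp ((evalKernel A B).comap Prod.snd measurable_snd)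
      ((evalKernel A B).comap Prod.fst measurable_fst) hp
      (ae_of_ae_map measurable_snd.aemeasurable hsnd)
      (ae_of_ae_map measurable_fst.aemeasurable hfst)
  refine le_trans (lintegral_mono_ae ?_) (Kernel.lintegral_compProd₀ (Kernel.const Unit ν)
    (Kernel.prodMkLeft Unit K) () (hmeas.pow_const p)).ge
  filter_upwards [ae_memPp_comp_evalKernel hp hμ, ae_memPp_of_comp hp _ hν] with y hy₁ hy₂
  have hconst : Kernel.const (A × Measure B) (evalKernel A B y) ∘ₘ K y = evalKernel A B y := by
    simp
  have h := Wp_comp_le (κ := K y) (evalKernel A B) (Kernel.const _ (evalKernel A B y)) hp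
    (by rwa [← Kernel.comp_apply]) (by rwa [hconst])
  rw [hconst, one_div, ENNReal.le_rpow_inv_iff (by positivity)] at h
  rwa [Kernel.comp_apply]

lemma lintegral_condBar_eq [PseudoEMetricSpace A] [SecondCountableTopology A]
    [OpensMeasurableSpace A] (hp : 1 ≤ p) [IsFiniteMeasure ν]
    (hμ : MemPp p edist (evalKernel A B ∘ₘ (K ∘ₘ ν)))
    (hν : MemPp p edist (evalKernel A B ∘ₘ ν))
    (hμ' : ∀ᵐ z ∂(K ∘ₘ ν), IsProbabilityMeasure z.2) (hν' : ∀ᵐ z ∂ν, IsProbabilityMeasure z.2)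
    {η : (A × Measure B) × (A × Measure B) → Measure B}
    (hη : IsCondBar ((ν ⊗ₘ K).map Prod.swap) η) :
    ∫⁻ z, (edist z.1.1 z.2.1 ^ p + Wp p edist (η z) z.2.2 ^ p) ∂(ν ⊗ₘ K).map Prod.swap =
      baseCost p ν K + fiberCost p ν K := by
  have hsnd := (swap_compProd_mem_Cpl ν K).2
  have hW := aemeasurable_Wp_comp_evalKernel hp hμ hν
  rw [lintegral_add_left (by fun_prop), baseCost_eq_lintegral_swap, fiberCost]
  congr 1
  rw [← hsnd] at hν' hW
  conv_rhs => rw [← hsnd]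
  rw [lintegral_map' (hW.pow_const p) measurable_snd.aemeasurable]
  refine lintegral_congr_ae ?_
  filter_upwards [hη.ae_eq (isCondBar_comp_evalKernel hμ'),
    ae_of_ae_map measurable_snd.aemeasurable hν'] with z hz hz'
  rw [hz, evalKernel_apply hz']

end Fiber

end Costs

section NestedDistance

variable {A B : Type*} [PseudoEMetricSpace A] [PseudoEMetricSpace B] [MeasurableSpace B] {p : ℝ}

lemma liftDist_comm (u v : A × Measure B) :
    liftDist p edist edist u v = liftDist p edist edist v u := by
  rw [liftDist, liftDist, edist_comm, Wp_comm edist_comm]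

variable [MeasurableSpace A]

lemma AWbar_comm (μ ν : Measure (A × Measure B)) :
    AWbar p edist edist μ ν = AWbar p edist edist ν μ :=
  Wp_comm liftDist_comm μ ν

lemma AWbar_self (hp : 1 ≤ p) (μ : Measure (A × Measure B)) : AWbar p edist edist μ μ = 0 := by
  have hp₀ : 0 < p := by positivity
  refine Wp_self hp₀ (fun z => ?_) μ
  simp [liftDist, Wp_self hp₀ edist_self, hp₀]

end NestedDistance

section CausalDistance

variable {A B : Type*} [MeasurableSpace A] [MeasurableSpace B] {p : ℝ}

lemma MemPpLift.ae_isProbabilityMeasure {dA : A → A → ℝ≥0∞} {dB : B → B → ℝ≥0∞}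
    {μ : Measure (A × Measure B)} (h : MemPpLift p dA dB μ) :
    ∀ᵐ z ∂μ, IsProbabilityMeasure z.2 :=
  h.2.1.mono fun _ hz => hz.1

lemma MemPpLift.memPp_comp_evalKernel [PseudoEMetricSpace A] [MetricSpace B] [CompleteSpace B]
    [SecondCountableTopology B] [BorelSpace B] [Nonempty B] {μ : Measure (A × Measure B)}
    (hp : 1 ≤ p) (h : MemPpLift p edist edist μ) :
    MemPp p edist (evalKernel A B ∘ₘ μ) := by
  obtain ⟨hμ, hmem, z₀, hz₀, hfin⟩ := h
  have := hz₀.1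
  obtain ⟨x₀⟩ := ‹Nonempty B›
  have hC := hz₀.Wp_dirac_ne_top hp x₀
  set C := Wp p edist (Measure.dirac x₀) z₀.2
  have hpt : ∀ᵐ z ∂μ, ∫⁻ b, edist x₀ b ^ p ∂(evalKernel A B z) ≤
      2 ^ (p - 1) * (C ^ p + liftDist p edist edist z₀ z ^ p) := by
    filter_upwards [hmem] with z hz
    have := hz.1
    have hsnd : Wp p edist z₀.2 z.2 ^ p ≤ liftDist p edist edist z₀ z ^ p := by
      rw [liftDist, one_div, ENNReal.rpow_inv_rpow (by positivity)]
      exact le_add_self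
    calc ∫⁻ b, edist x₀ b ^ p ∂(evalKernel A B z)
        = Wp p edist (Measure.dirac x₀) z.2 ^ p := by
          rw [evalKernel_apply hz.1, Wp_dirac_left x₀ z.2 (by fun_prop), one_div,
            ENNReal.rpow_inv_rpow (by positivity)]
      _ ≤ (C + Wp p edist z₀.2 z.2) ^ p := by
          gcongr
          exact Wp_edist_triangle hp _ _ _
      _ ≤ 2 ^ (p - 1) * (C ^ p + Wp p edist z₀.2 z.2 ^ p) :=
          ENNReal.rpow_add_le_mul_rpow_add_rpow _ _ hp
      _ ≤ _ := by gcongr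
  refine ⟨inferInstance, x₀, ne_top_of_le_ne_top ?_
    ((Measure.lintegral_bind (evalKernel A B).aemeasurable (by fun_prop)).trans_le
      (lintegral_mono_ae hpt))⟩
  rw [lintegral_const_mul' _ _ (by finiteness), lintegral_add_left measurable_const]
  simp only [lintegral_const, measure_univ, mul_one]
  finiteness

lemma add_rpow_one_div_le (hp : 1 ≤ p) {a b c a' b' c' : ℝ≥0∞}
    (h : a ^ (1 / p) ≤ b ^ (1 / p) + c ^ (1 / p))
    (h' : a' ^ (1 / p) ≤ b' ^ (1 / p) + c' ^ (1 / p)) :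
    (a + a') ^ (1 / p) ≤ (b + b') ^ (1 / p) + (c + c') ^ (1 / p) := by
  have hp₀ : 0 < p := by positivity
  have hL := ENNReal.Lp_add_le Finset.univ ![b ^ (1 / p), b' ^ (1 / p)]
    ![c ^ (1 / p), c' ^ (1 / p)] hp
  simp only [Fin.sum_univ_two, Matrix.cons_val_zero, Matrix.cons_val_one,
    one_div, ENNReal.rpow_inv_rpow hp₀.ne'] at hL h h' ⊢
  rw [ENNReal.rpow_inv_le_iff hp₀] at h h'
  exact le_trans (by gcongr) hL

variable [MetricSpace A] [CompleteSpace A] [SecondCountableTopology A] [BorelSpace A]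
  [MetricSpace B] [CompleteSpace B] [SecondCountableTopology B] [BorelSpace B] [Nonempty B]
  {μ ν lam : Measure (A × Measure B)}

lemma CWbar_eq_iInf (hp : 1 ≤ p) (hμ : MemPpLift p edist edist μ)
    (hν : MemPpLift p edist edist ν) :
    CWbar p edist edist μ ν =
      ⨅ K : {K : Kernel (A × Measure B) (A × Measure B) // IsMarkovKernel K ∧ K ∘ₘ ν = μ},
        (baseCost p ν K + fiberCost p ν K) ^ (1 / p) := by
  have := hμ.1
  have := hν.1
  apply le_antisymm
  · refine le_iInf fun ⟨K, hK, hKμ⟩ => ?_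
    subst hKμ
    have hη := isCondBar_comp_evalKernel hμ.ae_isProbabilityMeasure
    rw [← lintegral_condBar_eq hp (hμ.memPp_comp_evalKernel hp) (hν.memPp_comp_evalKernel hp)
      hμ.ae_isProbabilityMeasure hν.ae_isProbabilityMeasure hη]
    exact iInf₂_le_of_le _ (swap_compProd_mem_Cpl ν K) (iInf₂_le _ hη)
  · refine le_iInf₂ fun γ hγ => le_iInf₂ fun η hη => ?_
    obtain ⟨K, hK, rfl, rfl⟩ := exists_markovKernel_of_mem_Cpl hμ.ae_isProbabilityMeasure hγ
    rw [lintegral_condBar_eq hp (hμ.memPp_comp_evalKernel hp) (hν.memPp_comp_evalKernel hp)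
      hμ.ae_isProbabilityMeasure hν.ae_isProbabilityMeasure hη]
    exact iInf_le_of_le ⟨K, hK, rfl⟩ le_rfl

lemma CWbar_triangle (hp : 1 ≤ p) (hμ : MemPpLift p edist edist μ)
    (hν : MemPpLift p edist edist ν) (hlam : MemPpLift p edist edist lam) :
    CWbar p edist edist μ lam ≤ CWbar p edist edist μ ν + CWbar p edist edist ν lam := by
  have := hlam.1
  rw [CWbar_eq_iInf hp hμ hν, CWbar_eq_iInf hp hν hlam, CWbar_eq_iInf hp hμ hlam]
  refine ENNReal.le_iInf_add_iInf fun ⟨K₁, hK₁, hμ'⟩ ⟨K₂, hK₂, hν'⟩ => ?_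
  subst hν' hμ'
  exact iInf_le_of_le ⟨K₁ ∘ₖ K₂, inferInstance, Measure.comp_assoc.symm⟩
    (add_rpow_one_div_le hp (baseCost_comp_rpow_le hp lam K₁ K₂)
      (fiberCost_comp_rpow_le hp (hμ.memPp_comp_evalKernel hp) (hν.memPp_comp_evalKernel hp)
        (hlam.memPp_comp_evalKernel hp)))

lemma CWbar_le_AWbar (hp : 1 ≤ p) (hμ : MemPpLift p edist edist μ)
    (hν : MemPpLift p edist edist ν) :
    CWbar p edist edist μ ν ≤ AWbar p edist edist μ ν := by
  have := hμ.1
  have := hν.1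
  rw [CWbar_eq_iInf hp hμ hν]
  refine le_iInf₂ fun γ hγ => ?_
  obtain ⟨K, hK, rfl, rfl⟩ := exists_markovKernel_of_mem_Cpl hμ.ae_isProbabilityMeasure hγ
  refine iInf_le_of_le ⟨K, hK, rfl⟩ ?_
  gcongr
  have hfst : ∀ᵐ w ∂(ν ⊗ₘ K), IsProbabilityMeasure w.1.2 :=
    ae_of_ae_map measurable_fst.aemeasurable
      ((Measure.fst_compProd ν K).symm ▸ hν.ae_isProbabilityMeasure)
  have hsnd : ∀ᵐ w ∂(ν ⊗ₘ K), IsProbabilityMeasure w.2.2 :=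
    ae_of_ae_map measurable_snd.aemeasurable
      ((Measure.snd_compProd ν K).symm ▸ hμ.ae_isProbabilityMeasure)
  calc baseCost p ν K + fiberCost p ν K
      ≤ ∫⁻ w, edist w.2.1 w.1.1 ^ p ∂(ν ⊗ₘ K) +
          ∫⁻ w, Wp p edist (evalKernel A B w.2) (evalKernel A B w.1) ^ p ∂(ν ⊗ₘ K) := by
        gcongr
        · exact le_rfl
        · exact fiberCost_le_lintegral hp (hμ.memPp_comp_evalKernel hp)
            (hν.memPp_comp_evalKernel hp)
    _ = ∫⁻ w, (edist w.2.1 w.1.1 ^ p +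
          Wp p edist (evalKernel A B w.2) (evalKernel A B w.1) ^ p) ∂(ν ⊗ₘ K) :=
        (lintegral_add_left (by fun_prop) _).symm
    _ = ∫⁻ w, liftDist p edist edist w.2 w.1 ^ p ∂(ν ⊗ₘ K) := by
        refine lintegral_congr_ae ?_
        filter_upwards [hfst, hsnd] with w hw₁ hw₂
        rw [evalKernel_apply hw₁, evalKernel_apply hw₂, liftDist, one_div,
          ENNReal.rpow_inv_rpow (by positivity)]
    _ = ∫⁻ z, liftDist p edist edist z.1 z.2 ^ p ∂(ν ⊗ₘ K).map Prod.swap :=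
        (lintegral_map_equiv (fun z => liftDist p edist edist z.1 z.2 ^ p)
          MeasurableEquiv.prodComm).symm

end CausalDistance

section LaplaceTransform

open scoped NNReal BoundedContinuousFunction

lemma ext_of_forall_mem_submonoid_integral_eq {E : Type*} [MeasurableSpace E] [TopologicalSpace E]
    [PolishSpace E] [BorelSpace E] {P P' : Measure E} [IsFiniteMeasure P] [IsFiniteMeasure P']
    (M : Submonoid (E →ᵇ ℝ)) (hM : ∀ x y, x ≠ y → ∃ g ∈ M, g x ≠ g y)
    (h : ∀ g ∈ M, ∫ x, g x ∂P = ∫ x, g x ∂P') : P = P' := by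
  let S : StarSubalgebra ℝ (E →ᵇ ℝ) :=
    { Algebra.adjoin ℝ (M : Set (E →ᵇ ℝ)) with
      star_mem' := fun {g} hg => by
        rwa [show star g = g by ext; simp] }
  refine ext_of_forall_mem_subalgebra_integral_eq_of_polish (𝕜 := ℝ) (A := S) ?_ fun g hg => ?_
  · intro x y hxy
    obtain ⟨g, hg, hne⟩ := hM x y hxy
    exact ⟨g, ⟨_, ⟨g, Algebra.subset_adjoin hg, rfl⟩, rfl⟩, hne⟩
  · replace hg : g ∈ Submodule.span ℝ (M : Set (E →ᵇ ℝ)) := by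
      have : g ∈ Subalgebra.toSubmodule (Algebra.adjoin ℝ (M : Set (E →ᵇ ℝ))) := hg
      rwa [Algebra.adjoin_eq_span, Submonoid.closure_eq] at this
    induction hg using Submodule.span_induction with
    | mem g hg => exact h g hg
    | zero => simp
    | add f g _ _ hf hg =>
      simp only [BoundedContinuousFunction.add_apply]
      rw [integral_add (f.integrable _) (g.integrable _),
        integral_add (f.integrable _) (g.integrable _), hf, hg]
    | smul c g _ hg =>
      simp only [BoundedContinuousFunction.smul_apply]
      rw [integral_smul, integral_smul, hg]

lemma map_eq_map_of_lintegral_exp_neg {Ω I : Type*} [MeasurableSpace Ω] [Countable I]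
    {μ ν : Measure Ω} [IsFiniteMeasure μ] [IsFiniteMeasure ν] {c : I → Ω → ℝ≥0}
    (hc : ∀ i, Measurable (c i)) {S : AddSubmonoid (Ω → ℝ≥0)} (hcS : ∀ i, c i ∈ S)
    (h : ∀ u ∈ S, ∫⁻ ω, ENNReal.ofReal (Real.exp (-u ω)) ∂μ =
      ∫⁻ ω, ENNReal.ofReal (Real.exp (-u ω)) ∂ν) :
    μ.map (fun ω i => c i ω) = ν.map (fun ω i => c i ω) := by
  have hcm : Measurable fun ω i => c i ω := measurable_pi_lambda _ hc
  let g (i : I) : (I → ℝ≥0) →ᵇ ℝ :=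
    .ofNormedAddCommGroup (fun e => Real.exp (-e i)) (by fun_prop) 1 fun e => by simp
  let M : Submonoid ((I → ℝ≥0) →ᵇ ℝ) :=
    { carrier := {f | ∃ u ∈ S, ∀ ω, f (fun i => c i ω) = Real.exp (-u ω)}
      one_mem' := ⟨0, S.zero_mem, by simp⟩
      mul_mem' := by
        rintro f f' ⟨u, hu, hf⟩ ⟨u', hu', hf'⟩
        exact ⟨u + u', S.add_mem hu hu', fun ω => by simp [hf, hf', ← Real.exp_add, add_comm]⟩ }
  refine ext_of_forall_mem_submonoid_integral_eq M (fun e e' hne => ?_) fun f hf => ?_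
  · obtain ⟨i, hi⟩ := Function.ne_iff.1 hne
    exact ⟨g i, ⟨c i, hcS i, fun ω => rfl⟩, by simpa [g] using hi⟩
  · obtain ⟨u, hu, hfu⟩ := hf
    have hlap : ∀ ρ : Measure Ω, ∫ e, f e ∂ρ.map (fun ω i => c i ω) =
        (∫⁻ ω, ENNReal.ofReal (Real.exp (-u ω)) ∂ρ).toReal := fun ρ => by
      have hf := f.continuous.measurable
      have hmeas : Measurable fun ω => Real.exp (-u ω) := by
        simpa only [Function.comp_def, hfu] using hf.comp hcm
      rw [integral_map hcm.aemeasurable hf.aestronglyMeasurable]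
      simp only [hfu]
      exact integral_eq_lintegral_of_nonneg_ae (ae_of_all _ fun ω => Real.exp_nonneg _)
        hmeas.aestronglyMeasurable
    rw [hlap, hlap, h u hu]

lemma eq_of_map_eq_of_measurable_comap {Ω Z : Type*} [MeasurableSpace Ω] [MeasurableSpace Z]
    {μ ν : Measure Ω} {Φ : Ω → Z} (hΦ : Measurable Φ) {T : Ω → Ω}
    (hT : Measurable[MeasurableSpace.comap Φ inferInstance] T) (hμ : T =ᵐ[μ] id)
    (hν : T =ᵐ[ν] id) (h : μ.map Φ = ν.map Φ) : μ = ν := by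
  ext s hs
  obtain ⟨D, hD, hDT⟩ := hT hs
  have hmap : ∀ ρ : Measure Ω, T =ᵐ[ρ] id → ρ s = ρ.map Φ D := fun ρ hρ => by
    rw [Measure.map_apply hΦ hD, hDT]
    exact (measure_congr (hρ.preimage s)).symm
  rw [hmap μ hμ, hmap ν hν, h]

end LaplaceTransform

section TestFunctions

open scoped NNReal

/-- Bounded Lipschitz functions `g ≥ 0`, the building blocks of the test functions
`exp (-u)` on `𝒳₁ × 𝒫_p(𝒳₂)`. -/
structure IsTestFun {E : Type*} [PseudoEMetricSpace E] (g : E → ℝ≥0) : Prop where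
  exists_le : ∃ C, ∀ x, g x ≤ C
  exists_lipschitzWith : ∃ L, LipschitzWith L g

section IsTestFun

variable {E : Type*} [PseudoEMetricSpace E] {g g' : E → ℝ≥0}

lemma IsTestFun.zero : IsTestFun (0 : E → ℝ≥0) :=
  ⟨⟨0, fun _ => le_rfl⟩, 0, LipschitzWith.const 0⟩

lemma IsTestFun.add (h : IsTestFun g) (h' : IsTestFun g') : IsTestFun (g + g') := by
  obtain ⟨⟨C, hC⟩, L, hL⟩ := h
  obtain ⟨⟨C', hC'⟩, L', hL'⟩ := h'
  have hreal : LipschitzWith (L + L') fun x => (g x : ℝ) + g' x :=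
    LipschitzWith.add (f := fun x => (g x : ℝ)) hL hL'
  exact ⟨⟨C + C', fun x => add_le_add (hC x) (hC' x)⟩, L + L', hreal⟩

lemma isTestFun_thickenedIndicator {δ : ℝ} (hδ : 0 < δ) (F : Set E) :
    IsTestFun (thickenedIndicator hδ F) :=
  ⟨⟨1, thickenedIndicator_le_one hδ F⟩, _, lipschitzWith_thickenedIndicator hδ F⟩

lemma IsTestFun.measurable [MeasurableSpace E] [OpensMeasurableSpace E] (h : IsTestFun g) :
    Measurable g :=
  h.exists_lipschitzWith.choose_spec.continuous.measurable

lemma IsTestFun.lintegral_ne_top [MeasurableSpace E] (h : IsTestFun g) (m : Measure E)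
    [IsFiniteMeasure m] : ∫⁻ x, g x ∂m ≠ ∞ := by
  obtain ⟨C, hC⟩ := h.exists_le
  exact (IsFiniteMeasure.lintegral_lt_top_of_bounded_to_ennreal m
    ⟨C, fun x => ENNReal.coe_le_coe.2 (hC x)⟩).ne

end IsTestFun

section Lipschitz

variable {E : Type*} [PseudoEMetricSpace E] {g : E → ℝ≥0} {L : ℝ≥0}

lemma coe_le_add_of_lipschitzWith (hg : LipschitzWith L g) (x y : E) :
    (g y : ℝ≥0∞) ≤ g x + L * edist y x := by
  refine le_trans ?_ (add_le_add_right (hg y x) _)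
  rw [edist_nndist]
  exact_mod_cast NNReal.le_add_nndist (g y) (g x)

lemma lintegral_le_rpow_lintegral_rpow {Ω : Type*} [MeasurableSpace Ω] {p : ℝ} (hp : 1 ≤ p)
    {κ : Measure Ω} [IsProbabilityMeasure κ] {f : Ω → ℝ≥0∞} (hf : AEMeasurable f κ) :
    ∫⁻ ω, f ω ∂κ ≤ (∫⁻ ω, f ω ^ p ∂κ) ^ (1 / p) := by
  simpa [eLpNorm'] using
    eLpNorm'_le_eLpNorm'_of_exponent_le one_pos hp κ hf.aestronglyMeasurable

lemma lintegral_le_add_mul_Wp [MeasurableSpace E] [SecondCountableTopology E]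
    [OpensMeasurableSpace E] {p : ℝ} (hp : 1 ≤ p) (hg : LipschitzWith L g) (m n : Measure E)
    [IsProbabilityMeasure m] [IsProbabilityMeasure n] :
    ∫⁻ y, g y ∂n ≤ ∫⁻ x, g x ∂m + L * Wp p edist m n := by
  have hgm : Measurable fun x => (g x : ℝ≥0∞) := hg.continuous.measurable.coe_nnreal_ennreal
  have hnonempty : Nonempty (Cpl m n) := ⟨m.prod n, by simp, by simp⟩
  rw [Wp, iInf_subtype', ENNReal.mul_iInf' (by simp) fun _ => hnonempty, ENNReal.add_iInf]
  refine le_iInf fun ⟨π, hπ⟩ => ?_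
  have := isProbabilityMeasure_of_mem_Cpl hπ
  calc ∫⁻ y, g y ∂n = ∫⁻ z, g z.2 ∂π := (lintegral_snd_of_mem_Cpl hπ hgm).symm
    _ ≤ ∫⁻ z, (g z.1 + L * edist z.1 z.2) ∂π := by
        gcongr with z
        rw [edist_comm]
        exact coe_le_add_of_lipschitzWith hg z.1 z.2
    _ = ∫⁻ x, g x ∂m + L * ∫⁻ z, edist z.1 z.2 ∂π := by
        rw [lintegral_add_right _ (by fun_prop), lintegral_const_mul _ (by fun_prop),
          lintegral_fst_of_mem_Cpl hπ hgm]
    _ ≤ _ := by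
        gcongr
        exact lintegral_le_rpow_lintegral_rpow hp (by fun_prop)

end Lipschitz

section Potential

variable {A B : Type*} [MeasurableSpace A] [MeasurableSpace B] [Nonempty B]

/-- The function `(x, m) ↦ F x + ∫ G dm`. It is affine in the measure, so its conditional
expectations only see the barycenter. -/
def potential (F : A → ℝ≥0) (G : B → ℝ≥0) (z : A × Measure B) : ℝ≥0 :=
  F z.1 + (∫⁻ b, G b ∂(evalKernel A B z)).toNNReal

variable [PseudoEMetricSpace B]

lemma coe_potential (F : A → ℝ≥0) {G : B → ℝ≥0} (hG : IsTestFun G) (z : A × Measure B) :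
    (potential F G z : ℝ≥0∞) = F z.1 + ∫⁻ b, G b ∂(evalKernel A B z) := by
  rw [potential, ENNReal.coe_add, ENNReal.coe_toNNReal (hG.lintegral_ne_top _)]

variable [PseudoEMetricSpace A] [OpensMeasurableSpace B]

lemma measurable_potential [OpensMeasurableSpace A] {F : A → ℝ≥0} {G : B → ℝ≥0}
    (hF : IsTestFun F) (hG : IsTestFun G) : Measurable (potential F G) :=
  (hF.measurable.comp measurable_fst).add
    hG.measurable.coe_nnreal_ennreal.lintegral_kernel.ennreal_toNNReal

variable (A B) in
/-- The potentials of test functions. The functions `exp (-u)`, for `u` in this additive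
submonoid, form a multiplicative class. -/
def potentials : AddSubmonoid (A × Measure B → ℝ≥0) where
  carrier := {u | ∃ F G, IsTestFun F ∧ IsTestFun G ∧ u = potential F G}
  zero_mem' := ⟨0, 0, .zero, .zero, by ext; simp [potential]⟩
  add_mem' := by
    rintro _ _ ⟨F, G, hF, hG, rfl⟩ ⟨F', G', hF', hG', rfl⟩
    refine ⟨F + F', G + G', hF.add hF', hG.add hG', funext fun z => ENNReal.coe_injective ?_⟩
    have hGm := hG.measurable.coe_nnreal_ennreal
    simp only [Pi.add_apply, ENNReal.coe_add, coe_potential _ hG, coe_potential _ hG',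
      coe_potential _ (hG.add hG'), lintegral_add_left hGm]
    ring

end Potential

section LaplaceInequality

variable {A B : Type*} [MeasurableSpace A] [MeasurableSpace B]

lemma exp_neg_mul_one_add_le (s t : ℝ) :
    Real.exp (-s) * (1 + s) ≤ Real.exp (-t) + Real.exp (-s) * t := by
  have h := mul_le_mul_of_nonneg_left (Real.add_one_le_exp (s - t)) (Real.exp_nonneg (-s))
  rw [← Real.exp_add, show -s + (s - t) = -t by ring] at h
  linarith

/-- Convexity of `exp (-·)`, in a form without subtraction. -/
lemma ofReal_exp_neg_mul_one_add_le (s t : ℝ≥0) :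
    ENNReal.ofReal (Real.exp (-s)) * (1 + s) ≤
      ENNReal.ofReal (Real.exp (-t)) + ENNReal.ofReal (Real.exp (-s)) * t := by
  have h := ENNReal.ofReal_le_ofReal (exp_neg_mul_one_add_le s t)
  rwa [ENNReal.ofReal_add (by positivity) (by positivity), ENNReal.ofReal_mul (by positivity),
    ENNReal.ofReal_mul (by positivity), ENNReal.ofReal_add (by positivity) (by positivity),
    ENNReal.ofReal_one, ENNReal.ofReal_coe_nnreal, ENNReal.ofReal_coe_nnreal] at h

lemma ofReal_exp_neg_le_lintegral_add {Ω : Type*} [MeasurableSpace Ω] {κ : Measure Ω}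
    [IsProbabilityMeasure κ] {u : Ω → ℝ≥0} (hu : Measurable u) {s : ℝ≥0} {δ : ℝ≥0∞}
    (h : ∫⁻ ω, u ω ∂κ ≤ s + δ) :
    ENNReal.ofReal (Real.exp (-s)) ≤ ∫⁻ ω, ENNReal.ofReal (Real.exp (-u ω)) ∂κ + δ := by
  set e := ENNReal.ofReal (Real.exp (-s))
  have he : e ≤ 1 := by simp [e]
  have hint : e * (1 + s) ≤ ∫⁻ ω, ENNReal.ofReal (Real.exp (-u ω)) ∂κ + δ + e * s :=
    calc e * (1 + s) = ∫⁻ _, e * (1 + s) ∂κ := by simp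
      _ ≤ ∫⁻ ω, (ENNReal.ofReal (Real.exp (-u ω)) + e * u ω) ∂κ :=
        lintegral_mono fun ω => ofReal_exp_neg_mul_one_add_le s (u ω)
      _ = ∫⁻ ω, ENNReal.ofReal (Real.exp (-u ω)) ∂κ + e * ∫⁻ ω, u ω ∂κ := by
        rw [lintegral_add_left (by fun_prop), lintegral_const_mul _ (by fun_prop)]
      _ ≤ ∫⁻ ω, ENNReal.ofReal (Real.exp (-u ω)) ∂κ + (e * s + 1 * δ) := by
        gcongr
        exact (mul_le_mul_right h e).trans_eq (mul_add _ _ _) |>.trans (by gcongr)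
      _ = _ := by ring
  rw [mul_add, mul_one] at hint
  exact ENNReal.le_of_add_le_add_right (by finiteness) hint

variable {p : ℝ} {F : A → ℝ≥0} {G : B → ℝ≥0} {L L' : ℝ≥0}

lemma lintegral_potential_le [PseudoEMetricSpace A] [OpensMeasurableSpace A]
    [PseudoEMetricSpace B] [SecondCountableTopology B] [OpensMeasurableSpace B] [Nonempty B]
    (hp : 1 ≤ p) (hF : LipschitzWith L F) (hG : IsTestFun G) (hGL : LipschitzWith L' G)
    (K : Kernel (A × Measure B) (A × Measure B)) [IsMarkovKernel K] (y : A × Measure B) :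
    ∫⁻ z, potential F G z ∂K y ≤ potential F G y + (L * ∫⁻ z, edist z.1 y.1 ∂K y +
      L' * Wp p edist ((evalKernel A B ∘ₖ K) y) (evalKernel A B y)) := by
  have hFm : Measurable fun z : A × Measure B => (F z.1 : ℝ≥0∞) :=
    hF.continuous.measurable.coe_nnreal_ennreal.comp measurable_fst
  have hGm : Measurable fun b => (G b : ℝ≥0∞) := hGL.continuous.measurable.coe_nnreal_ennreal
  have hbase : ∫⁻ z, F z.1 ∂K y ≤ F y.1 + L * ∫⁻ z, edist z.1 y.1 ∂K y :=
    calc ∫⁻ z, F z.1 ∂K y ≤ ∫⁻ z, (F y.1 + L * edist z.1 y.1) ∂K y :=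
          lintegral_mono fun z => coe_le_add_of_lipschitzWith hF y.1 z.1
      _ = _ := by
          rw [lintegral_add_left measurable_const, lintegral_const_mul _ (by fun_prop)]
          simp
  have hfiber := lintegral_le_add_mul_Wp hp hGL (evalKernel A B y) ((evalKernel A B ∘ₖ K) y)
  rw [Wp_comm edist_comm] at hfiber
  calc ∫⁻ z, potential F G z ∂K y
      = ∫⁻ z, F z.1 ∂K y + ∫⁻ b, G b ∂((evalKernel A B ∘ₖ K) y) := by
        simp only [coe_potential F hG]
        rw [lintegral_add_left hFm, Kernel.lintegral_comp _ _ _ hGm]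
    _ ≤ _ := add_le_add hbase hfiber
    _ = _ := by
        rw [coe_potential F hG]
        ring

lemma lintegral_exp_neg_potential_le [PseudoEMetricSpace A] [SecondCountableTopology A]
    [OpensMeasurableSpace A] [MetricSpace B] [CompleteSpace B] [SecondCountableTopology B]
    [BorelSpace B] [Nonempty B] (hp : 1 ≤ p) (hF : IsTestFun F) (hFL : LipschitzWith L F)
    (hG : IsTestFun G) (hGL : LipschitzWith L' G) {ν : Measure (A × Measure B)}
    [IsProbabilityMeasure ν] {K : Kernel (A × Measure B) (A × Measure B)} [IsMarkovKernel K]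
    (hμ : MemPp p edist (evalKernel A B ∘ₘ (K ∘ₘ ν)))
    (hν : MemPp p edist (evalKernel A B ∘ₘ ν)) :
    ∫⁻ y, ENNReal.ofReal (Real.exp (-potential F G y)) ∂ν ≤
      ∫⁻ z, ENNReal.ofReal (Real.exp (-potential F G z)) ∂(K ∘ₘ ν) +
        (L * baseCost p ν K ^ (1 / p) + L' * fiberCost p ν K ^ (1 / p)) := by
  have hu := measurable_potential hF hG
  have hexp : Measurable fun z => ENNReal.ofReal (Real.exp (-potential F G z)) := by fun_prop
  have hdist : Measurable fun y : A × Measure B => ∫⁻ z, edist z.1 y.1 ∂K y :=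
    Measurable.lintegral_kernel_prod_right' (f := fun w : (A × Measure B) × (A × Measure B) =>
      edist w.2.1 w.1.1) (by fun_prop)
  calc ∫⁻ y, ENNReal.ofReal (Real.exp (-potential F G y)) ∂ν
      ≤ ∫⁻ y, (∫⁻ z, ENNReal.ofReal (Real.exp (-potential F G z)) ∂K y +
          (L * ∫⁻ z, edist z.1 y.1 ∂K y +
            L' * Wp p edist ((evalKernel A B ∘ₖ K) y) (evalKernel A B y))) ∂ν :=
        lintegral_mono fun y => ofReal_exp_neg_le_lintegral_add hu
          (lintegral_potential_le hp hFL hG hGL K y)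
    _ = ∫⁻ z, ENNReal.ofReal (Real.exp (-potential F G z)) ∂(K ∘ₘ ν) +
          (L * ∫⁻ w, edist w.2.1 w.1.1 ∂(ν ⊗ₘ K) +
            L' * ∫⁻ y, Wp p edist ((evalKernel A B ∘ₖ K) y) (evalKernel A B y) ∂ν) := by
        rw [lintegral_add_left hexp.lintegral_kernel, lintegral_add_left (hdist.const_mul _),
          lintegral_const_mul _ hdist, lintegral_const_mul' _ _ (by finiteness),
          Measure.lintegral_bind K.aemeasurable hexp.aemeasurable,
          Measure.lintegral_compProd (by fun_prop)]
    _ ≤ _ := by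
        gcongr
        · exact lintegral_le_rpow_lintegral_rpow hp (by fun_prop)
        · exact lintegral_le_rpow_lintegral_rpow hp (aemeasurable_Wp_comp_evalKernel hp hμ hν)

end LaplaceInequality

section Separation

variable {A B : Type*} [MeasurableSpace A] [MeasurableSpace B]
  [MetricSpace A] [CompleteSpace A] [SecondCountableTopology A] [BorelSpace A]
  [MetricSpace B] [CompleteSpace B] [SecondCountableTopology B] [BorelSpace B] [Nonempty B]
  {p : ℝ} {μ ν : Measure (A × Measure B)}

lemma lintegral_exp_neg_le_of_CWbar_eq_zero (hp : 1 ≤ p) (hμ : MemPpLift p edist edist μ)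
    (hν : MemPpLift p edist edist ν) (h : CWbar p edist edist μ ν = 0)
    {u : A × Measure B → ℝ≥0} (hu : u ∈ potentials A B) :
    ∫⁻ z, ENNReal.ofReal (Real.exp (-u z)) ∂ν ≤ ∫⁻ z, ENNReal.ofReal (Real.exp (-u z)) ∂μ := by
  obtain ⟨F, G, hF, hG, rfl⟩ := hu
  obtain ⟨L, hFL⟩ := hF.exists_lipschitzWith
  obtain ⟨L', hGL⟩ := hG.exists_lipschitzWith
  have := hμ.1
  have := hν.1
  have hnonempty : Nonempty {K : Kernel (A × Measure B) (A × Measure B) //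
    IsMarkovKernel K ∧ K ∘ₘ ν = μ} := ⟨Kernel.const _ μ, inferInstance, by simp⟩
  suffices H : ∫⁻ z, ENNReal.ofReal (Real.exp (-potential F G z)) ∂ν ≤
      ∫⁻ z, ENNReal.ofReal (Real.exp (-potential F G z)) ∂μ +
        (L + L') * CWbar p edist edist μ ν by
    simpa [h] using H
  rw [CWbar_eq_iInf hp hμ hν, ENNReal.mul_iInf' (by simp) fun _ => hnonempty, ENNReal.add_iInf]
  refine le_iInf fun ⟨K, hK, hKμ⟩ => ?_
  subst hKμ
  refine (lintegral_exp_neg_potential_le hp hF hFL hG hGL (hμ.memPp_comp_evalKernel hp)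
    (hν.memPp_comp_evalKernel hp)).trans ?_
  rw [add_mul]
  gcongr
  · exact le_self_add
  · exact le_add_self

end Separation

end TestFunctions

section CountableFamily

open scoped NNReal

section Basis

variable {E : Type*} [TopologicalSpace E] [SecondCountableTopology E]

/-- Finite intersections of complements of basic open sets: a countable π-system of closed sets
generating the Borel σ-algebra. -/
def basicClosed (s : Finset (TopologicalSpace.countableBasis E)) : Set E := ⋂ U ∈ s, (U : Set E)ᶜ

lemma isClosed_basicClosed (s : Finset (TopologicalSpace.countableBasis E)) :
    IsClosed (basicClosed s) :=
  isClosed_biInter fun U _ => (TopologicalSpace.isOpen_of_mem_countableBasis U.2).isClosed_compl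

lemma isPiSystem_range_basicClosed : IsPiSystem (Set.range (basicClosed (E := E))) := by
  classical
  rintro _ ⟨s, rfl⟩ _ ⟨t, rfl⟩ _
  exact ⟨s ∪ t, Finset.set_biInter_inter _ _ _⟩

lemma generateFrom_range_basicClosed [MeasurableSpace E] [BorelSpace E] :
    ‹MeasurableSpace E› = MeasurableSpace.generateFrom (Set.range (basicClosed (E := E))) := by
  refine le_antisymm ?_ (MeasurableSpace.generateFrom_le ?_)
  · rw [BorelSpace.measurable_eq (α := E),
      (TopologicalSpace.isBasis_countableBasis E).borel_eq_generateFrom]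
    refine MeasurableSpace.generateFrom_le fun U hU => ?_
    have hmem : basicClosed {⟨U, hU⟩} ∈ Set.range (basicClosed (E := E)) := ⟨_, rfl⟩
    simpa [basicClosed] using (MeasurableSpace.measurableSet_generateFrom hmem).compl
  · rintro _ ⟨s, rfl⟩
    exact (isClosed_basicClosed s).measurableSet

end Basis

section TestFun

variable {E : Type*} [PseudoEMetricSpace E] [SecondCountableTopology E]

/-- A countable family of test functions decreasing to the indicators of the basic closed sets. -/
def testFun (i : Finset (TopologicalSpace.countableBasis E) × ℕ) : E → ℝ≥0 :=
  thickenedIndicator (Nat.one_div_pos_of_nat (α := ℝ) (n := i.2)) (basicClosed i.1)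

lemma isTestFun_testFun (i : Finset (TopologicalSpace.countableBasis E) × ℕ) :
    IsTestFun (testFun i) :=
  isTestFun_thickenedIndicator _ _

lemma measurable_of_lintegral_testFun [MeasurableSpace E] [BorelSpace E] {Ω : Type*}
    [MeasurableSpace Ω] {k : Ω → Measure E} [∀ ω, IsProbabilityMeasure (k ω)]
    (h : ∀ i, Measurable fun ω => ∫⁻ x, testFun i x ∂(k ω)) : Measurable k := by
  refine .measure_of_isPiSystem_of_isProbabilityMeasure generateFrom_range_basicClosed
    isPiSystem_range_basicClosed ?_
  rintro _ ⟨s, rfl⟩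
  exact measurable_of_tendsto_metrizable (fun n => h (s, n)) (tendsto_pi_nhds.2 fun ω =>
    tendsto_lintegral_thickenedIndicator_of_isClosed (k ω) (isClosed_basicClosed s) _
      tendsto_one_div_add_atTop_nhds_zero_nat)

end TestFun

lemma measurable_of_measurable_dirac {Ω E : Type*} [MeasurableSpace Ω] [MeasurableSpace E]
    {f : Ω → E} (h : Measurable fun ω => Measure.dirac (f ω)) : Measurable f := fun s hs => by
  convert (Measure.measurable_coe hs).comp h (measurableSet_singleton 1) using 1
  ext ω
  by_cases hω : f ω ∈ s <;> simp [hs, hω]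

section Coordinates

variable {A B : Type*} [PseudoEMetricSpace A] [SecondCountableTopology A] [MeasurableSpace A]
  [PseudoEMetricSpace B] [SecondCountableTopology B] [MeasurableSpace B] [BorelSpace B]
  [Nonempty B]

variable (A B) in
/-- A countable family of potentials determining `x` and `m` in `(x, m) ∈ A × 𝒫(B)`. -/
def coordinate : (Finset (TopologicalSpace.countableBasis A) × ℕ) ⊕
    (Finset (TopologicalSpace.countableBasis B) × ℕ) → A × Measure B → ℝ≥0 :=
  Sum.elim (fun i => potential (testFun i) 0) (fun j => potential 0 (testFun j))

lemma coordinate_mem_potentials (i) : coordinate A B i ∈ potentials A B := by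
  rcases i with i | j
  · exact ⟨_, _, isTestFun_testFun i, .zero, rfl⟩
  · exact ⟨_, _, .zero, isTestFun_testFun j, rfl⟩

variable [BorelSpace A]

lemma measurable_coordinate (i) : Measurable (coordinate A B i) := by
  obtain ⟨F, G, hF, hG, h⟩ := coordinate_mem_potentials i
  exact h ▸ measurable_potential hF hG

lemma measurable_comap_coordinate :
    Measurable[MeasurableSpace.comap (fun z i => coordinate A B i z) inferInstance]
      (fun z : A × Measure B => (z.1, evalKernel A B z)) := by
  have hprob (z : A × Measure B) : IsProbabilityMeasure (evalKernel A B z) := inferInstance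
  let _ : MeasurableSpace (A × Measure B) :=
    MeasurableSpace.comap (fun z i => coordinate A B i z) inferInstance
  have hcoord : ∀ i, Measurable fun z => (coordinate A B i z : ℝ≥0∞) := fun i =>
    have h : Measurable fun z => coordinate A B i z :=
      (measurable_pi_apply i).comp (comap_measurable fun z i => coordinate A B i z)
    h.coe_nnreal_ennreal
  refine (measurable_of_measurable_dirac (measurable_of_lintegral_testFun fun i => ?_)).prodMk
    (measurable_of_lintegral_testFun fun j => ?_)
  · convert hcoord (.inl i) with z
    rw [lintegral_dirac' _ (isTestFun_testFun i).measurable.coe_nnreal_ennreal]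
    simp [coordinate, potential]
  · convert hcoord (.inr j) with z
    simp [coordinate, coe_potential _ (isTestFun_testFun j)]

lemma eq_of_lintegral_exp_neg_potentials {μ ν : Measure (A × Measure B)} [IsFiniteMeasure μ]
    [IsFiniteMeasure ν] (hμ : ∀ᵐ z ∂μ, IsProbabilityMeasure z.2)
    (hν : ∀ᵐ z ∂ν, IsProbabilityMeasure z.2)
    (h : ∀ u ∈ potentials A B, ∫⁻ z, ENNReal.ofReal (Real.exp (-u z)) ∂μ =
      ∫⁻ z, ENNReal.ofReal (Real.exp (-u z)) ∂ν) : μ = ν := by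
  have hae : ∀ ρ : Measure (A × Measure B), (∀ᵐ z ∂ρ, IsProbabilityMeasure z.2) →
      (fun z => (z.1, evalKernel A B z)) =ᵐ[ρ] id := fun ρ hρ => by
    filter_upwards [hρ] with z hz
    rw [evalKernel_apply hz, id]
  exact eq_of_map_eq_of_measurable_comap (measurable_pi_lambda _ measurable_coordinate)
    measurable_comap_coordinate (hae μ hμ) (hae ν hν)
    (map_eq_map_of_lintegral_exp_neg measurable_coordinate coordinate_mem_potentials h)

end Coordinates

end CountableFamily

lemma eq_of_CWbar_eq_zero {A B : Type*} [MeasurableSpace A] [MeasurableSpace B]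
    [MetricSpace A] [CompleteSpace A] [SecondCountableTopology A] [BorelSpace A]
    [MetricSpace B] [CompleteSpace B] [SecondCountableTopology B] [BorelSpace B] [Nonempty B]
    {p : ℝ} {μ ν : Measure (A × Measure B)} (hp : 1 ≤ p) (hμ : MemPpLift p edist edist μ)
    (hν : MemPpLift p edist edist ν) (h : CWbar p edist edist μ ν = 0)
    (h' : CWbar p edist edist ν μ = 0) : μ = ν := by
  have := hμ.1
  have := hν.1
  exact eq_of_lintegral_exp_neg_potentials hμ.ae_isProbabilityMeasure hν.ae_isProbabilityMeasure
    fun u hu => (lintegral_exp_neg_le_of_CWbar_eq_zero hp hν hμ h' hu).antisymm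
      (lintegral_exp_neg_le_of_CWbar_eq_zero hp hμ hν h hu)

section SymmetrizedCausalDistance

variable {A B : Type*} [MeasurableSpace A] [MeasurableSpace B]
  [MetricSpace A] [CompleteSpace A] [SecondCountableTopology A] [BorelSpace A]
  [MetricSpace B] [CompleteSpace B] [SecondCountableTopology B] [BorelSpace B] [Nonempty B]
  {p : ℝ} {μ ν lam : Measure (A × Measure B)}

lemma SCWbar_triangle (hp : 1 ≤ p) (hμ : MemPpLift p edist edist μ)
    (hν : MemPpLift p edist edist ν) (hlam : MemPpLift p edist edist lam) :
    SCWbar p edist edist μ lam ≤ SCWbar p edist edist μ ν + SCWbar p edist edist ν lam := by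
  refine max_le ((CWbar_triangle hp hμ hν hlam).trans ?_)
    ((CWbar_triangle hp hlam hν hμ).trans ?_)
  · exact add_le_add (le_max_left _ _) (le_max_left _ _)
  · rw [add_comm]
    exact add_le_add (le_max_right _ _) (le_max_right _ _)

lemma SCWbar_le_AWbar (hp : 1 ≤ p) (hμ : MemPpLift p edist edist μ)
    (hν : MemPpLift p edist edist ν) :
    SCWbar p edist edist μ ν ≤ AWbar p edist edist μ ν :=
  max_le (CWbar_le_AWbar hp hμ hν) ((CWbar_le_AWbar hp hν hμ).trans_eq (AWbar_comm ν μ))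

lemma SCWbar_eq_zero_iff (hp : 1 ≤ p) (hμ : MemPpLift p edist edist μ)
    (hν : MemPpLift p edist edist ν) : SCWbar p edist edist μ ν = 0 ↔ μ = ν := by
  constructor
  · intro h
    obtain ⟨h₁, h₂⟩ := max_eq_bot.1 h
    exact eq_of_CWbar_eq_zero hp hμ hν h₁ h₂
  · rintro rfl
    exact le_bot_iff.1 ((SCWbar_le_AWbar hp hμ hμ).trans_eq (AWbar_self hp μ))

end SymmetrizedCausalDistance

/-- **Theorem 4.12.**  `SCW̄_p` is a metric on `𝒫_p(𝒳₁ × 𝒫_p(𝒳₂))` and is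
dominated by `AW̄_p`. -/
theorem SCWbar_is_metric_le_AWbar
    {X1 X2 : Type} [MetricSpace X1] [CompleteSpace X1] [SecondCountableTopology X1]
    [MeasurableSpace X1] [BorelSpace X1] [Nonempty X1]
    [MetricSpace X2] [CompleteSpace X2] [SecondCountableTopology X2]
    [MeasurableSpace X2] [BorelSpace X2] [Nonempty X2]
    (p : ℝ) (hp : 1 ≤ p) :
    let dA : X1 → X1 → ℝ≥0∞ := edist
    let dB : X2 → X2 → ℝ≥0∞ := edist
    -- symmetry
    (∀ μ ν : Measure (X1 × Measure X2), MemPpLift p dA dB μ → MemPpLift p dA dB ν →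
        SCWbar p dA dB μ ν = SCWbar p dA dB ν μ) ∧
    -- triangle inequality
    (∀ μ ν lam : Measure (X1 × Measure X2),
        MemPpLift p dA dB μ → MemPpLift p dA dB ν → MemPpLift p dA dB lam →
        SCWbar p dA dB μ lam ≤ SCWbar p dA dB μ ν + SCWbar p dA dB ν lam) ∧
    -- vanishes exactly on the diagonal
    (∀ μ ν : Measure (X1 × Measure X2), MemPpLift p dA dB μ → MemPpLift p dA dB ν →
        (SCWbar p dA dB μ ν = 0 ↔ μ = ν)) ∧
    -- dominated by `AW̄_p`
    (∀ μ ν : Measure (X1 × Measure X2), MemPpLift p dA dB μ → MemPpLift p dA dB ν →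
        SCWbar p dA dB μ ν ≤ AWbar p dA dB μ ν) := by
  intro dA dB
  exact ⟨fun _ _ _ _ => max_comm _ _,
    fun _ _ _ hμ hν hlam => SCWbar_triangle hp hμ hν hlam,
    fun _ _ hμ hν => SCWbar_eq_zero_iff hp hμ hν,
    fun _ _ hμ hν => SCWbar_le_AWbar hp hμ hν⟩

end AWPaper
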